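/- Let s > 11/2 and suppose (ξ_k)_{k≥1} satisfies Σ_{k≥1} ‖ξ_k‖_{H^σ} < ∞ for every σ ≥ 0. Define g(X) and h^k(X) as for the stochastic two-component Camassa–Holm system: for X = (u,η), g(X) = (−u ∂_x u + ½ (1−∂²_x)^{-1} Σ_k 𝓛²_{ξ_k} (1−∂²_x) u, −u ∂_x η + ½ Σ_k 𝓛²_{ξ_k} η) and h^k(X) = (−(1−∂²_x)^{-1} 𝓛_{ξ_k} (1−∂²_x) u, −𝓛_{ξ_k} η). Then there is a constant C > 0 (depending on s and (ξ_k)) such that for all X = (u,η), Y = (v,ρ) ∈ H^s(𝕋) × H^{s-1}(𝕋): 2 (g(X) − g(Y), X − Y)_{H^{s-2}×H^{s-3}} + Σ_{k=1}^∞ ‖h^k(X) − h^k(Y)‖²_{H^{s-2}×H^{s-3}} ≤ C (1 + ‖X‖²_{H^s×H^{s-1}} + ‖Y‖²_{H^s×H^{s-1}}) ‖X − Y‖²_{H^{s-2}×H^{s-3}}. -/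

import Mathlib

noncomputable section
open scoped BigOperators

/-- A (complex-valued) function on the torus `𝕋 = ℝ/2πℤ`, represented by its sequence of
Fourier coefficients `f̂ : ℤ → ℂ`. -/
abbrev FC := ℤ → ℂ

namespace FC

/-- The Sobolev weight `(1+k²)^s`. -/
def wt (s : ℝ) (k : ℤ) : ℝ := (1 + (k : ℝ) ^ 2) ^ s

/-- `c` represents a function belonging to the Sobolev space `H^s(𝕋)`. -/
def memHs (s : ℝ) (c : FC) : Prop := Summable fun k : ℤ => wt s k * ‖c k‖ ^ 2

/-- The `H^s(𝕋)` norm: `‖f‖²_{H^s} = Σ_{k∈ℤ} (1+k²)^s |f̂(k)|²`. -/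
def hsNorm (s : ℝ) (c : FC) : ℝ := Real.sqrt (∑' k : ℤ, wt s k * ‖c k‖ ^ 2)

/-- The `H^s(𝕋)` inner product `(f,g)_{H^s} = Σ_{k∈ℤ} (1+k²)^s f̂(k) conj(ĝ(k))`
(its real part; the sum is real for real-valued functions). -/
def hsInner (s : ℝ) (c d : FC) : ℝ :=
  (∑' k : ℤ, ((wt s k : ℂ) * (c k * (starRingEnd ℂ) (d k)))).re

/-- `c` represents a real-valued function (conjugate-symmetric coefficients). -/
def isReal (c : FC) : Prop := ∀ k : ℤ, c (-k) = (starRingEnd ℂ) (c k)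

/-- The derivative `∂ₓ`, i.e. the Fourier multiplier `ik`. -/
def D1 (c : FC) : FC := fun k => Complex.I * (k : ℂ) * c k

/-- The pointwise product of functions, i.e. convolution of Fourier coefficients. -/
def mul (c d : FC) : FC := fun k => ∑' j : ℤ, c j * d (k - j)

/-- The represented function, evaluated at `x ∈ ℝ`. -/
def eval (c : FC) (x : ℝ) : ℂ := ∑' k : ℤ, c k * Complex.exp (Complex.I * (k : ℂ) * (x : ℂ))

/-- The `L^∞` norm (supremum of the represented periodic function over ℝ). -/
def linfty (c : FC) : ℝ := ⨆ x : ℝ, ‖eval c x‖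

/-- The `W^{1,∞}` norm. -/
def w1infty (c : FC) : ℝ := linfty c + linfty (D1 c)

/-- A Fourier multiplier operator with real symbol `m`. -/
def mult (m : ℤ → ℝ) (c : FC) : FC := fun k => (m k : ℂ) * c k

/-- The operator `(1-∂ₓ²)⁻¹`, i.e. the Fourier multiplier `(1+k²)⁻¹`. -/
def helmInv : FC → FC := mult fun k => (1 + (k : ℝ) ^ 2)⁻¹

/-- The operator `1-∂ₓ²`, i.e. the Fourier multiplier `1+k²`. -/
def helm : FC → FC := mult fun k => 1 + (k : ℝ) ^ 2

/-- The operator `T̃_ε = (1-ε²∂ₓ²)⁻¹`, i.e. the Fourier multiplier `(1+ε²k²)⁻¹`. -/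
def T (ε : ℝ) : FC → FC := mult fun k => (1 + ε ^ 2 * (k : ℝ) ^ 2)⁻¹

/-- The periodic Hilbert transform, i.e. the Fourier multiplier `-i·sgn(k)`. -/
def hilbert (c : FC) : FC := fun k => -Complex.I * (Int.sign k : ℂ) * c k

/-- The Friedrichs-type mollifier `J_ε`, the Fourier multiplier `ĵ(εk)`. -/
def Jmol (jhat : ℝ → ℝ) (ε : ℝ) : FC → FC := mult fun k => jhat (ε * (k : ℝ))

/-- The generalized Lie derivative `𝓛_ξ f = ξ ∂ₓ f + (∂ₓ ξ) f`. -/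
def lie (ξ c : FC) : FC := mul ξ (D1 c) + mul (D1 ξ) c

/-- `𝓛²_ξ f = 𝓛_ξ (𝓛_ξ f)`. -/
def lie2 (ξ c : FC) : FC := lie ξ (lie ξ c)

/-- The coefficientwise sum `Σ_{k∈ℕ} F k` of a sequence of functions. -/
def tsumFC (F : ℕ → FC) : FC := fun m => ∑' k : ℕ, F k m

/-- The norm on the product space `H^{s₁}×H^{s₂}`. -/
def pairNorm (s₁ s₂ : ℝ) (c d : FC) : ℝ := Real.sqrt (hsNorm s₁ c ^ 2 + hsNorm s₂ d ^ 2)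

/-- The inner product on the product space `H^{s₁}×H^{s₂}`:
`((c₁,d₁),(c₂,d₂)) ↦ (c₁,c₂)_{H^{s₁}} + (d₁,d₂)_{H^{s₂}}`. -/
def pairInner (s₁ s₂ : ℝ) (c₁ d₁ c₂ d₂ : FC) : ℝ := hsInner s₁ c₁ c₂ + hsInner s₂ d₁ d₂

end FC

/-- First component of the singular drift of the stochastic two-component CH system:
`−u ∂ₓ u + ½ (1−∂ₓ²)⁻¹ Σ_k 𝓛²_{ξ_k} (1−∂ₓ²) u`. -/
def gCH1 (ξ : ℕ → FC) (u : FC) : FC :=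
  -(FC.mul u (FC.D1 u)) +
    (1 / 2 : ℝ) • FC.helmInv (FC.tsumFC fun k => FC.lie2 (ξ k) (FC.helm u))

/-- Second component of the singular drift of the stochastic two-component CH system:
`−u ∂ₓ η + ½ Σ_k 𝓛²_{ξ_k} η`. -/
def gCH2 (ξ : ℕ → FC) (u η : FC) : FC :=
  -(FC.mul u (FC.D1 η)) + (1 / 2 : ℝ) • FC.tsumFC fun k => FC.lie2 (ξ k) η

/-- First component of the diffusion coefficient `h^k`:
`−(1−∂ₓ²)⁻¹ 𝓛_{ξ_k} (1−∂ₓ²) u`. -/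
def hCH1 (ξ : ℕ → FC) (k : ℕ) (u : FC) : FC :=
  -(FC.helmInv (FC.lie (ξ k) (FC.helm u)))

/-- Second component of the diffusion coefficient `h^k`: `−𝓛_{ξ_k} η`. -/
def hCH2 (ξ : ℕ → FC) (k : ℕ) (η : FC) : FC := -(FC.lie (ξ k) η)


lemma peetre (x y : ℝ) : 1 + x ^ 2 ≤ 2 * ((1 + y ^ 2) * (1 + (x - y) ^ 2)) := by
  nlinarith [sq_nonneg (x - 2 * y), sq_nonneg (y * (x - y)), sq_nonneg y, sq_nonneg (x - y)]

lemma jb_pos (x : ℝ) : 0 < 1 + x ^ 2 := by positivity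

lemma jb_one_le (x : ℝ) : 1 ≤ 1 + x ^ 2 := by nlinarith [sq_nonneg x]

lemma abs_le_jb (x : ℝ) : |x| ≤ 1 + x ^ 2 := by
  rw [abs_le]; constructor <;> nlinarith [sq_nonneg (x - 1), sq_nonneg (x + 1)]

lemma abs_le_jb_half (x : ℝ) : |x| ≤ (1 + x ^ 2) ^ (1 / 2 : ℝ) := by
  rw [← Real.sqrt_eq_rpow]
  apply Real.le_sqrt_of_sq_le
  rw [sq_abs]; linarith

lemma peetre_rpow {a : ℝ} (ha : 0 ≤ a) (x y : ℝ) :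
    (1 + x ^ 2) ^ a ≤ 2 ^ a * ((1 + y ^ 2) ^ a * (1 + (x - y) ^ 2) ^ a) := by
  rw [← Real.mul_rpow (jb_pos _).le (jb_pos _).le, ← Real.mul_rpow (by norm_num)
    (mul_pos (jb_pos _) (jb_pos _)).le]
  exact Real.rpow_le_rpow (jb_pos _).le (peetre x y) ha

lemma rpow_half_mul (σ : ℝ) {x : ℝ} (hx : 0 < x) : x ^ σ = x ^ (σ / 2) * x ^ (σ / 2) := by
  rw [← Real.rpow_add hx]; congr 1; ring

lemma hasDerivAt_jb (σ x : ℝ) :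
    HasDerivAt (fun y : ℝ => (1 + y ^ 2) ^ σ) (2 * σ * x * (1 + x ^ 2) ^ (σ - 1)) x := by
  have h1 : HasDerivAt (fun y : ℝ => 1 + y ^ 2) (2 * x) x := by
    simpa using (hasDerivAt_pow 2 x).const_add 1
  have := h1.rpow_const (p := σ) (Or.inl (jb_pos x).ne')
  convert this using 1; ring

lemma jb_mono {σ x y : ℝ} (hσ : 0 ≤ σ) (h : |x| ≤ |y|) : (1 + x ^ 2) ^ σ ≤ (1 + y ^ 2) ^ σ := by
  apply Real.rpow_le_rpow (jb_pos _).le _ hσ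
  have := sq_le_sq.2 h
  linarith

lemma jb_split (σ x : ℝ) : (1 + x ^ 2) ^ σ = (1 + x ^ 2) * (1 + x ^ 2) ^ (σ - 1) := by
  nth_rewrite 2 [← Real.rpow_one (1 + x ^ 2)]
  rw [← Real.rpow_add (jb_pos x)]; congr 1; ring

lemma hdiff {σ : ℝ} (hσ : 1 ≤ σ) {k l : ℝ} (h : |l| ≤ |k|) :
    |k| * |(1 + k ^ 2) ^ σ - (1 + l ^ 2) ^ σ| ≤ 2 * σ * |k - l| * (1 + k ^ 2) ^ σ := by
  have key : |(1 + k ^ 2) ^ σ - (1 + l ^ 2) ^ σ| ≤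
      (2 * σ * |k| * (1 + k ^ 2) ^ (σ - 1)) * |k - l| := by
    have := Convex.norm_image_sub_le_of_norm_hasDerivWithin_le
      (f := fun y : ℝ => (1 + y ^ 2) ^ σ) (f' := fun x => 2 * σ * x * (1 + x ^ 2) ^ (σ - 1))
      (s := Set.Icc (-|k|) |k|) (C := 2 * σ * |k| * (1 + k ^ 2) ^ (σ - 1)) (x := l) (y := k)
      (fun x _ => (hasDerivAt_jb σ x).hasDerivWithinAt) ?_ (convex_Icc _ _)
      (abs_le.1 h) (abs_le.1 le_rfl)
    · simpa [Real.norm_eq_abs] using this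
    · intro x hx
      have hx' : |x| ≤ |k| := abs_le.2 hx
      rw [Real.norm_eq_abs, abs_mul, abs_mul, abs_mul, abs_of_pos (by linarith : 0 < σ),
        abs_of_pos (Real.rpow_pos_of_pos (jb_pos x) _), abs_two]
      have := jb_mono (σ := σ - 1) (by linarith) hx'
      gcongr
  calc _ ≤ |k| * ((2 * σ * |k| * (1 + k ^ 2) ^ (σ - 1)) * |k - l|) := by gcongr
    _ = 2 * σ * |k - l| * (k ^ 2 * (1 + k ^ 2) ^ (σ - 1)) := by rw [← sq_abs k]; ring
    _ ≤ _ := by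
      rw [jb_split σ k]
      gcongr
      linarith

lemma jb_half_bound {σ : ℝ} (hσ : 0 ≤ σ) (k l : ℝ) :
    (1 + k ^ 2) ^ σ ≤ 2 ^ (σ / 2) * ((1 + (k - l) ^ 2) ^ (σ / 2) *
      ((1 + k ^ 2) ^ (σ / 2) * (1 + l ^ 2) ^ (σ / 2))) := by
  rw [rpow_half_mul σ (jb_pos k)]
  have := peetre_rpow (half_pos_nonneg hσ) k l
  have h2 := mul_le_mul_of_nonneg_right this (Real.rpow_pos_of_pos (jb_pos k) (σ / 2)).le
  linarith
where half_pos_nonneg {σ : ℝ} (h : 0 ≤ σ) : 0 ≤ σ / 2 := by linarith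

lemma comm_aux {σ : ℝ} (hσ : 1 ≤ σ) {k l : ℝ} (h : |l| ≤ |k|) :
    |l * (1 + k ^ 2) ^ σ - k * (1 + l ^ 2) ^ σ| ≤ (1 + 2 * σ) * 2 ^ (σ / 2) *
      ((1 + (k - l) ^ 2) ^ ((σ + 1) / 2) * ((1 + k ^ 2) ^ (σ / 2) * (1 + l ^ 2) ^ (σ / 2))) := by
  have h1 : l * (1 + k ^ 2) ^ σ - k * (1 + l ^ 2) ^ σ =
    -((k - l) * (1 + k ^ 2) ^ σ) + k * ((1 + k ^ 2) ^ σ - (1 + l ^ 2) ^ σ) := by ring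
  have h2 := abs_add_le (-((k - l) * (1 + k ^ 2) ^ σ)) (k * ((1 + k ^ 2) ^ σ - (1 + l ^ 2) ^ σ))
  rw [← h1, abs_neg, abs_mul, abs_mul, abs_of_pos (Real.rpow_pos_of_pos (jb_pos k) σ)] at h2
  have h3 := hdiff hσ h
  have h4 := jb_half_bound (by linarith : 0 ≤ σ) k l
  have h5 : (1 + (k - l) ^ 2) ^ ((σ + 1) / 2) =
      (1 + (k - l) ^ 2) ^ (1 / 2 : ℝ) * (1 + (k - l) ^ 2) ^ (σ / 2) := by
    rw [← Real.rpow_add (jb_pos _)]; congr 1; ring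
  calc _ ≤ (1 + 2 * σ) * (|k - l| * (1 + k ^ 2) ^ σ) := by linarith
    _ ≤ (1 + 2 * σ) * ((1 + (k - l) ^ 2) ^ (1 / 2 : ℝ) * (2 ^ (σ / 2) *
        ((1 + (k - l) ^ 2) ^ (σ / 2) * ((1 + k ^ 2) ^ (σ / 2) * (1 + l ^ 2) ^ (σ / 2))))) := by
      gcongr
      exact abs_le_jb_half _
    _ = _ := by rw [h5]; ring

lemma comm_bound {σ : ℝ} (hσ : 1 ≤ σ) (k l : ℝ) :
    |l * (1 + k ^ 2) ^ σ - k * (1 + l ^ 2) ^ σ| ≤ (1 + 2 * σ) * 2 ^ (σ / 2) *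
      ((1 + (k - l) ^ 2) ^ ((σ + 1) / 2) * ((1 + k ^ 2) ^ (σ / 2) * (1 + l ^ 2) ^ (σ / 2))) := by
  rcases le_total |l| |k| with h | h
  · exact comm_aux hσ h
  · have := comm_aux hσ h
    rw [abs_sub_comm, show (k - l) ^ 2 = (l - k) ^ 2 by ring,
      mul_comm ((1 + k ^ 2) ^ (σ / 2))]
    exact this

lemma mixed_diff {f f' f'' : ℝ → ℝ} (hf : ∀ x, HasDerivAt f (f' x) x)
    (hf' : ∀ x, HasDerivAt f' (f'' x) x) (k p q B : ℝ)
    (hB : ∀ x, |x - k| ≤ |p| + |q| → |f'' x| ≤ B) :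
    |f (k - p) + f (k - q) - f k - f (k - p - q)| ≤ B * (|p| * |q|) := by
  have h1 : ∀ x, |x - k| ≤ |p| → |f' x - f' (x - q)| ≤ B * |q| := by
    intro x hx
    have := Convex.norm_image_sub_le_of_norm_hasDerivWithin_le
      (f := f') (f' := f'') (s := Metric.closedBall k (|p| + |q|)) (C := B) (x := x - q) (y := x)
      (fun x _ => (hf' x).hasDerivWithinAt)
      (fun y hy => hB y (by simpa [Real.dist_eq] using hy)) (convex_closedBall _ _)
      (by
        rw [Metric.mem_closedBall, Real.dist_eq]
        have := abs_sub (x - k) q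
        rw [show x - q - k = (x - k) - q by ring]; linarith)
      (by rw [Metric.mem_closedBall, Real.dist_eq]; linarith [abs_nonneg q])
    simpa [Real.norm_eq_abs] using this
  have := Convex.norm_image_sub_le_of_norm_hasDerivWithin_le
      (f := fun x => f x - f (x - q)) (f' := fun x => f' x - f' (x - q))
      (s := Metric.closedBall k |p|) (C := B * |q|) (x := k) (y := k - p)
      (fun x _ => by
        have h := (hf (x - q)).comp_sub_const x q
        exact ((hf x).sub h).hasDerivWithinAt)
      (fun y hy => h1 y (by simpa [Real.dist_eq] using hy)) (convex_closedBall _ _)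
      (by simp) (by simp)
  simp only [Real.norm_eq_abs] at this
  rw [show k - p - k = -p by ring, abs_neg] at this
  calc _ = |f (k - p) - f (k - p - q) - (f k - f (k - q))| := by congr 1; ring
    _ ≤ _ := this
    _ = _ := by ring


lemma dd_bound (p q : ℝ) : 1 + (|p| + |q|) ^ 2 ≤ 2 * ((1 + p ^ 2) * (1 + q ^ 2)) := by
  rw [← sq_abs p, ← sq_abs q]
  nlinarith [sq_nonneg (|p| - |q|), sq_nonneg (|p| * |q|)]

lemma dd_pos (p q : ℝ) : 0 < (1 + p ^ 2) * (1 + q ^ 2) := by positivity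

lemma dd_one_le (p q : ℝ) : 1 ≤ (1 + p ^ 2) * (1 + q ^ 2) :=
  one_le_mul_of_one_le_of_one_le (jb_one_le p) (jb_one_le q)

lemma near {a : ℝ} (ha : 0 ≤ a) (k p q y : ℝ) (hy : |y - k| ≤ |p| + |q|) :
    (1 + y ^ 2) ^ a ≤ 16 ^ a * (((1 + p ^ 2) * (1 + q ^ 2)) ^ a *
      ((1 + k ^ 2) ^ (a / 2) * (1 + (k - p - q) ^ 2) ^ (a / 2))) := by
  set D := (1 + p ^ 2) * (1 + q ^ 2) with hD
  have hDp : 0 < D := dd_pos p q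
  have hd := dd_bound p q
  rw [← hD] at hd
  have h1 : 1 + y ^ 2 ≤ 16 * D * (1 + k ^ 2) := by
    have h := peetre y k
    have h2 : (y - k) ^ 2 ≤ (|p| + |q|) ^ 2 := by
      rw [← sq_abs]; gcongr
    have h3 : (1 + k ^ 2) * (1 + (y - k) ^ 2) ≤ (1 + k ^ 2) * (2 * D) := by
      gcongr; linarith
    nlinarith [mul_pos hDp (jb_pos k)]
  have h2 : 1 + y ^ 2 ≤ 16 * D * (1 + (k - p - q) ^ 2) := by
    have h := peetre y (k - p - q)
    have h2 : (y - (k - p - q)) ^ 2 ≤ (2 * (|p| + |q|)) ^ 2 := by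
      rw [← sq_abs]; gcongr
      have e : y - (k - p - q) = (y - k) + (p + q) := by ring
      rw [e]
      linarith [abs_add_le (y - k) (p + q), abs_add_le p q]
    have h3 : (1 + (k - p - q) ^ 2) * (1 + (y - (k - p - q)) ^ 2)
        ≤ (1 + (k - p - q) ^ 2) * (8 * D) := by
      gcongr; nlinarith
    nlinarith [mul_pos hDp (jb_pos (k - p - q))]
  have ha2 : 0 ≤ a / 2 := by linarith
  have g1 := Real.rpow_le_rpow (jb_pos y).le h1 ha2
  have g2 := Real.rpow_le_rpow (jb_pos y).le h2 ha2
  rw [Real.mul_rpow (by positivity) (by positivity), Real.mul_rpow (by positivity) hDp.le] at g1 g2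
  rw [rpow_half_mul a (jb_pos y), rpow_half_mul a hDp, rpow_half_mul a (by norm_num : (0:ℝ) < 16)]
  calc _ ≤ _ := mul_le_mul g1 g2 (by positivity) (by positivity)
    _ = _ := by ring

/-- The function `x²(1+x²)^σ`. -/
def phi (σ x : ℝ) : ℝ := x ^ 2 * (1 + x ^ 2) ^ σ

def phi1 (σ x : ℝ) : ℝ :=
  2 * (σ + 1) * (x * (1 + x ^ 2) ^ σ) - 2 * σ * (x * (1 + x ^ 2) ^ (σ - 1))

def phi2 (σ x : ℝ) : ℝ :=
  2 * (σ + 1) * ((1 + x ^ 2) ^ σ + x * (2 * σ * x * (1 + x ^ 2) ^ (σ - 1))) -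
    2 * σ * ((1 + x ^ 2) ^ (σ - 1) + x * (2 * (σ - 1) * x * (1 + x ^ 2) ^ (σ - 1 - 1)))

lemma phi_eq (σ x : ℝ) : phi σ x = (1 + x ^ 2) ^ (σ + 1) - (1 + x ^ 2) ^ σ := by
  rw [jb_split (σ + 1) x, add_sub_cancel_right, phi]; ring

lemma phi_deriv (σ x : ℝ) : HasDerivAt (phi σ) (phi1 σ x) x := by
  have : phi σ = fun x => (1 + x ^ 2) ^ (σ + 1) - (1 + x ^ 2) ^ σ := funext (phi_eq σ)
  rw [this]
  have h := (hasDerivAt_jb (σ + 1) x).sub (hasDerivAt_jb σ x)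
  have e : phi1 σ x = 2 * (σ + 1) * x * (1 + x ^ 2) ^ (σ + 1 - 1) -
      2 * σ * x * (1 + x ^ 2) ^ (σ - 1) := by
    rw [add_sub_cancel_right, phi1]; ring
  rw [e]
  exact h

lemma phi1_deriv (σ x : ℝ) : HasDerivAt (phi1 σ) (phi2 σ x) x := by
  have h : ∀ τ : ℝ, HasDerivAt (fun y : ℝ => y * (1 + y ^ 2) ^ τ)
      ((1 + x ^ 2) ^ τ + x * (2 * τ * x * (1 + x ^ 2) ^ (τ - 1))) x := by
    intro τ
    have := (hasDerivAt_id' x).mul (hasDerivAt_jb τ x)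
    rw [one_mul] at this
    exact this
  exact ((h σ).const_mul (2 * (σ + 1))).sub ((h (σ - 1)).const_mul (2 * σ))

lemma phi2_bound {σ : ℝ} (hσ : 1 ≤ σ) (x : ℝ) :
    |phi2 σ x| ≤ (4 * (σ + 1) * (2 * σ + 1)) * (1 + x ^ 2) ^ σ := by
  have e1 : (1 + x ^ 2) ^ σ = (1 + x ^ 2) ^ (σ - 1) + x ^ 2 * (1 + x ^ 2) ^ (σ - 1) := by
    rw [jb_split σ x]; ring
  have e2 : (1 + x ^ 2) ^ (σ - 1) =
      (1 + x ^ 2) ^ (σ - 1 - 1) + x ^ 2 * (1 + x ^ 2) ^ (σ - 1 - 1) := by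
    rw [jb_split (σ - 1) x]; ring
  have n0 : 0 < (1 + x ^ 2) ^ σ := Real.rpow_pos_of_pos (jb_pos x) _
  have n1 : 0 < (1 + x ^ 2) ^ (σ - 1) := Real.rpow_pos_of_pos (jb_pos x) _
  have n2 : 0 < (1 + x ^ 2) ^ (σ - 1 - 1) := Real.rpow_pos_of_pos (jb_pos x) _
  have m1 : 0 ≤ x ^ 2 * (1 + x ^ 2) ^ (σ - 1) := by positivity
  have m2 : 0 ≤ x ^ 2 * (1 + x ^ 2) ^ (σ - 1 - 1) := by positivity
  have E : phi2 σ x = 2 * (σ + 1) * (1 + x ^ 2) ^ σ +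
      4 * σ * (σ + 1) * (x ^ 2 * (1 + x ^ 2) ^ (σ - 1)) - 2 * σ * (1 + x ^ 2) ^ (σ - 1) -
      4 * σ * (σ - 1) * (x ^ 2 * (1 + x ^ 2) ^ (σ - 1 - 1)) := by rw [phi2]; ring
  rw [E]
  generalize (1 + x ^ 2) ^ σ = X at *
  generalize (1 + x ^ 2) ^ (σ - 1) = Y at *
  generalize hZ : x ^ 2 * (1 + x ^ 2) ^ (σ - 1 - 1) = Z at *
  generalize x ^ 2 * Y = V at *
  have hY : Y ≤ X := by linarith
  have hV : V ≤ X := by linarith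
  have hZX : Z ≤ X := by linarith
  have c1 : 0 ≤ 4 * σ * (σ + 1) := by positivity
  have c2 : 0 ≤ 4 * σ * (σ - 1) := by
    have : 0 ≤ σ - 1 := by linarith
    positivity
  have c3 : 0 ≤ 2 * σ := by linarith
  have d1 := mul_le_mul_of_nonneg_left hV c1
  have d2 := mul_le_mul_of_nonneg_left hZX c2
  have d3 := mul_le_mul_of_nonneg_left hY c3
  have f1 := mul_nonneg c1 m1
  have f2 := mul_nonneg c2 m2
  have f3 := mul_nonneg c3 n1.le
  rw [abs_le]
  constructor <;> nlinarith

lemma phi_ident (σ k l j j' : ℝ) :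
    2 * (phi σ j + phi σ j') - (k + l) * (k * (1 + k ^ 2) ^ σ + l * (1 + l ^ 2) ^ σ) =
    2 * (phi σ j + phi σ j' - phi σ k - phi σ l) +
    (1 / 2) * ((k ^ 2 - l ^ 2) * ((1 + k ^ 2) ^ σ - (1 + l ^ 2) ^ σ)) +
    (1 / 2) * ((k - l) ^ 2 * ((1 + k ^ 2) ^ σ + (1 + l ^ 2) ^ σ)) := by
  simp only [phi]; ring

lemma hdiff2_aux {σ : ℝ} (hσ : 1 ≤ σ) {k l : ℝ} (h : |l| ≤ |k|) :
    |(k ^ 2 - l ^ 2) * ((1 + k ^ 2) ^ σ - (1 + l ^ 2) ^ σ)| ≤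
      4 * σ * ((k - l) ^ 2 * ((1 + k ^ 2) ^ σ + (1 + l ^ 2) ^ σ)) := by
  have h1 := hdiff hσ h
  have hl : 0 < (1 + l ^ 2) ^ σ := Real.rpow_pos_of_pos (jb_pos l) _
  have h2 : |k + l| ≤ 2 * |k| := by linarith [abs_add_le k l]
  rw [show k ^ 2 - l ^ 2 = (k - l) * (k + l) by ring, abs_mul, abs_mul, ← sq_abs (k - l)]
  calc _ ≤ |k - l| * (2 * |k|) * |(1 + k ^ 2) ^ σ - (1 + l ^ 2) ^ σ| := by gcongr
    _ = 2 * |k - l| * (|k| * |(1 + k ^ 2) ^ σ - (1 + l ^ 2) ^ σ|) := by ring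
    _ ≤ 2 * |k - l| * (2 * σ * |k - l| * (1 + k ^ 2) ^ σ) := by gcongr
    _ ≤ 2 * |k - l| * (2 * σ * |k - l| * ((1 + k ^ 2) ^ σ + (1 + l ^ 2) ^ σ)) := by
      gcongr; linarith
    _ = _ := by ring

lemma hdiff2 {σ : ℝ} (hσ : 1 ≤ σ) (k l : ℝ) :
    |(k ^ 2 - l ^ 2) * ((1 + k ^ 2) ^ σ - (1 + l ^ 2) ^ σ)| ≤
      4 * σ * ((k - l) ^ 2 * ((1 + k ^ 2) ^ σ + (1 + l ^ 2) ^ σ)) := by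
  rcases le_total |l| |k| with h | h
  · exact hdiff2_aux hσ h
  · have := hdiff2_aux hσ h
    convert this using 1
    · congr 1; ring
    · ring

lemma W_bound {σ : ℝ} (hσ : 1 ≤ σ) : ∃ C > (0 : ℝ), ∀ k p q : ℝ,
    |2 * (phi σ (k - p) + phi σ (k - q)) - (k + (k - p - q)) *
      (k * (1 + k ^ 2) ^ σ + (k - p - q) * (1 + (k - p - q) ^ 2) ^ σ)| ≤
    C * (((1 + p ^ 2) * (1 + q ^ 2)) ^ (σ + 2) *
      ((1 + k ^ 2) ^ (σ / 2) * (1 + (k - p - q) ^ 2) ^ (σ / 2))) := by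
  refine ⟨2 * (4 * (σ + 1) * (2 * σ + 1) * 16 ^ σ) + (2 * σ + 1 / 2) * (4 * 16 ^ σ), by positivity,
    fun k p q => ?_⟩
  set D := (1 + p ^ 2) * (1 + q ^ 2) with hD
  have hDp : 0 < D := dd_pos p q
  have hD1 : 1 ≤ D := dd_one_le p q
  set l := k - p - q with hl
  set Z := (1 + k ^ 2) ^ (σ / 2) * (1 + l ^ 2) ^ (σ / 2) with hZ
  have hZp : 0 < Z := by positivity
  have hσ0 : 0 ≤ σ := by linarith
  have nr : ∀ y, |y - k| ≤ |p| + |q| → (1 + y ^ 2) ^ σ ≤ 16 ^ σ * (D ^ σ * Z) :=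
    fun y hy => near hσ0 k p q y hy
  have t1 : |phi σ (k - p) + phi σ (k - q) - phi σ k - phi σ l| ≤
      (4 * (σ + 1) * (2 * σ + 1) * (16 ^ σ * (D ^ σ * Z))) * (|p| * |q|) := by
    apply mixed_diff (phi_deriv σ) (phi1_deriv σ)
    intro x hx
    refine (phi2_bound hσ x).trans ?_
    gcongr
    exact nr x hx
  have hpq : |p| * |q| ≤ D ^ (2 : ℝ) := by
    calc |p| * |q| ≤ (1 + p ^ 2) * (1 + q ^ 2) := by
          gcongr
          · exact abs_le_jb p
          · exact abs_le_jb q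
      _ ≤ D ^ (2 : ℝ) := by
          rw [Real.rpow_two]; nlinarith
  have hkl : (k - l) ^ 2 ≤ 2 * D ^ (2 : ℝ) := by
    have h1 := dd_bound p q
    have h2 : (k - l) ^ 2 ≤ (|p| + |q|) ^ 2 := by
      rw [← sq_abs]; gcongr
      rw [hl, show k - (k - p - q) = p + q by ring]; exact abs_add_le p q
    rw [Real.rpow_two]; nlinarith
  have hadd : D ^ (σ + 2) = D ^ σ * D ^ (2 : ℝ) := Real.rpow_add hDp _ _
  have nk := nr k (by simp; positivity)
  have nl := nr l (by
    rw [hl, show k - p - q - k = -(p + q) by ring, abs_neg]; exact abs_add_le p q)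
  have t2 : (k - l) ^ 2 * ((1 + k ^ 2) ^ σ + (1 + l ^ 2) ^ σ) ≤
      4 * 16 ^ σ * (D ^ (σ + 2) * Z) := by
    calc _ ≤ (2 * D ^ (2 : ℝ)) * (16 ^ σ * (D ^ σ * Z) + 16 ^ σ * (D ^ σ * Z)) := by gcongr
      _ = _ := by rw [hadd]; ring
  have t1' : |phi σ (k - p) + phi σ (k - q) - phi σ k - phi σ l| ≤
      4 * (σ + 1) * (2 * σ + 1) * 16 ^ σ * (D ^ (σ + 2) * Z) := by
    refine t1.trans ?_
    calc _ ≤ (4 * (σ + 1) * (2 * σ + 1) * (16 ^ σ * (D ^ σ * Z))) * D ^ (2 : ℝ) := by gcongr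
      _ = _ := by rw [hadd]; ring
  have t3 := hdiff2 hσ k l
  rw [phi_ident]
  have n2 : 0 ≤ (k - l) ^ 2 * ((1 + k ^ 2) ^ σ + (1 + l ^ 2) ^ σ) := by positivity
  generalize phi σ (k - p) + phi σ (k - q) - phi σ k - phi σ l = A1 at *
  generalize (k ^ 2 - l ^ 2) * ((1 + k ^ 2) ^ σ - (1 + l ^ 2) ^ σ) = A2 at *
  generalize (k - l) ^ 2 * ((1 + k ^ 2) ^ σ + (1 + l ^ 2) ^ σ) = A3 at *
  have t4 : (2 * σ + 1 / 2) * A3 ≤ (2 * σ + 1 / 2) * (4 * 16 ^ σ * (D ^ (σ + 2) * Z)) := by gcongr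
  have := abs_add_three (2 * A1) (1 / 2 * A2) (1 / 2 * A3)
  rw [abs_mul, abs_mul, abs_mul, abs_of_nonneg n2, abs_two, abs_of_pos (by norm_num : (0:ℝ) < 1/2)]
    at this
  nlinarith

lemma crude_phi {σ : ℝ} (hσ : 1 ≤ σ) (k p q : ℝ) : |phi σ (k - p)| ≤
    16 ^ (σ + 1) * (((1 + p ^ 2) * (1 + q ^ 2)) ^ (σ + 2) *
      ((1 + k ^ 2) ^ ((σ + 1) / 2) * (1 + (k - p - q) ^ 2) ^ ((σ + 1) / 2))) := by
  have h1 : |phi σ (k - p)| ≤ (1 + (k - p) ^ 2) ^ (σ + 1) := by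
    rw [abs_of_nonneg (by rw [phi]; positivity), phi_eq]
    have : 0 < (1 + (k - p) ^ 2) ^ σ := by positivity
    linarith
  have h2 := near (by linarith : 0 ≤ σ + 1) k p q (k - p) (by simp)
  refine h1.trans (h2.trans ?_)
  gcongr
  · exact dd_one_le p q
  · norm_num

lemma crude_kj {σ : ℝ} (hσ : 1 ≤ σ) (k p q : ℝ) :
    |k * (k - p) * (1 + k ^ 2) ^ σ| ≤
    5 * 16 ^ (σ + 1) * (((1 + p ^ 2) * (1 + q ^ 2)) ^ (σ + 2) *
      ((1 + k ^ 2) ^ ((σ + 1) / 2) * (1 + (k - p - q) ^ 2) ^ ((σ + 1) / 2))) := by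
  have h2 := near (by linarith : 0 ≤ σ + 1) k p q k (by simp; positivity)
  have hD := dd_one_le p q
  have hDp := dd_pos p q
  have hpD : 1 + p ^ 2 ≤ (1 + p ^ 2) * (1 + q ^ 2) := by nlinarith [sq_nonneg p, sq_nonneg q, sq_nonneg (p * q)]
  have h1 : |k * (k - p)| ≤ 5 * ((1 + p ^ 2) * (1 + q ^ 2)) * (1 + k ^ 2) := by
    have a1 := peetre (k - p) k
    rw [show k - p - k = -p by ring, neg_sq] at a1
    have a2 : |k * (k - p)| ≤ k ^ 2 + (k - p) ^ 2 := by
      rw [abs_le]; constructor <;> nlinarith [sq_nonneg (k - (k - p)), sq_nonneg (k + (k - p))]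
    nlinarith [sq_nonneg k]
  have e : ((1 + p ^ 2) * (1 + q ^ 2)) ^ (σ + 2) =
      ((1 + p ^ 2) * (1 + q ^ 2)) * ((1 + p ^ 2) * (1 + q ^ 2)) ^ (σ + 1) := by
    nth_rewrite 2 [← Real.rpow_one ((1 + p ^ 2) * (1 + q ^ 2))]
    rw [← Real.rpow_add hDp]; congr 1; ring
  rw [abs_mul, abs_of_pos (by positivity : 0 < (1 + k ^ 2) ^ σ), e]
  have e2 := jb_split (σ + 1) k
  rw [add_sub_cancel_right] at e2
  calc _ ≤ 5 * ((1 + p ^ 2) * (1 + q ^ 2)) * (1 + k ^ 2) * (1 + k ^ 2) ^ σ := by gcongr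
    _ = 5 * ((1 + p ^ 2) * (1 + q ^ 2)) * (1 + k ^ 2) ^ (σ + 1) := by rw [e2]; ring
    _ ≤ _ := mul_le_mul_of_nonneg_left h2 (by positivity)
    _ = _ := by ring


lemma cs_tsum {ι : Type*} {F G : ι → ℝ} (hF : ∀ i, 0 ≤ F i) (hG : ∀ i, 0 ≤ G i)
    (sF : Summable fun i => F i ^ 2) (sG : Summable fun i => G i ^ 2) :
    (Summable fun i => F i * G i) ∧
      ∑' i, F i * G i ≤ Real.sqrt (∑' i, F i ^ 2) * Real.sqrt (∑' i, G i ^ 2) := by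
  have hpq : Real.HolderConjugate 2 2 := Real.HolderConjugate.two_two
  constructor
  · refine Real.summable_mul_of_Lp_Lq_of_nonneg hpq hF hG ?_ ?_ <;> simpa
  · have := Real.inner_le_Lp_mul_Lq_tsum_of_nonneg hpq hF hG (by simpa) (by simpa)
    simpa [Real.sqrt_eq_rpow] using this

lemma young {ι : Type*} {a : ι → ℝ} (ha : ∀ i, 0 ≤ a i) (sa : Summable a) (τ : ι → ℤ)
    {F G : ℤ → ℝ} (hF : ∀ i, 0 ≤ F i) (hG : ∀ i, 0 ≤ G i)
    (sF : Summable fun i => F i ^ 2) (sG : Summable fun i => G i ^ 2) :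
    (Summable fun x : ℤ × ι => a x.2 * (G x.1 * F (x.1 - τ x.2))) ∧
    ∑' x : ℤ × ι, a x.2 * (G x.1 * F (x.1 - τ x.2)) ≤
      (∑' i, a i) * (Real.sqrt (∑' i, G i ^ 2) * Real.sqrt (∑' i, F i ^ 2)) := by
  have sh : ∀ t : ℤ, (Summable fun k => F (k - t) ^ 2) ∧ ∑' k, F (k - t) ^ 2 = ∑' k, F k ^ 2 := by
    intro t
    constructor
    · have := (Equiv.subRight t).summable_iff (f := fun k => F k ^ 2)
      exact this.2 sF
    · have := (Equiv.subRight t).tsum_eq (fun k => F k ^ 2)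
      exact this
  have inner : ∀ i, (Summable fun k => a i * (G k * F (k - τ i))) ∧
      ∑' k, a i * (G k * F (k - τ i)) ≤
        a i * (Real.sqrt (∑' i, G i ^ 2) * Real.sqrt (∑' i, F i ^ 2)) := by
    intro i
    have := cs_tsum hG (fun k => hF (k - τ i)) sG (sh (τ i)).1
    rw [(sh (τ i)).2] at this
    refine ⟨this.1.mul_left _, ?_⟩
    rw [tsum_mul_left]
    exact mul_le_mul_of_nonneg_left this.2 (ha i)
  have s1 : Summable fun x : ι × ℤ => a x.1 * (G x.2 * F (x.2 - τ x.1)) := by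
    rw [summable_prod_of_nonneg (fun x => mul_nonneg (ha _) (mul_nonneg (hG _) (hF _)))]
    refine ⟨fun i => (inner i).1, ?_⟩
    refine Summable.of_nonneg_of_le (fun i => tsum_nonneg fun k =>
      mul_nonneg (ha _) (mul_nonneg (hG _) (hF _))) (fun i => (inner i).2) (sa.mul_right _)
  have s2 : Summable fun x : ℤ × ι => a x.2 * (G x.1 * F (x.1 - τ x.2)) :=
    (Equiv.prodComm ℤ ι).summable_iff
      (f := fun x : ι × ℤ => a x.1 * (G x.2 * F (x.2 - τ x.1))) |>.2 s1
  refine ⟨s2, ?_⟩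
  have e : ∑' x : ℤ × ι, a x.2 * (G x.1 * F (x.1 - τ x.2)) =
      ∑' x : ι × ℤ, a x.1 * (G x.2 * F (x.2 - τ x.1)) :=
    (Equiv.prodComm ℤ ι).tsum_eq fun x : ι × ℤ => a x.1 * (G x.2 * F (x.2 - τ x.1))
  rw [e, s1.tsum_prod, ← tsum_mul_right]
  exact Summable.tsum_le_tsum (fun i => (inner i).2) s1.prod (sa.mul_right _)

namespace FC

lemma wt_pos (s : ℝ) (k : ℤ) : 0 < wt s k := Real.rpow_pos_of_pos (jb_pos _) _

lemma wt_add (a b : ℝ) (k : ℤ) : wt (a + b) k = wt a k * wt b k := Real.rpow_add (jb_pos _) _ _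

lemma wt_mono {a b : ℝ} (h : a ≤ b) (k : ℤ) : wt a k ≤ wt b k :=
  Real.rpow_le_rpow_of_exponent_le (jb_one_le _) h

lemma wt_one (k : ℤ) : wt 1 k = 1 + (k : ℝ) ^ 2 := Real.rpow_one _

lemma wt_zero (k : ℤ) : wt 0 k = 1 := Real.rpow_zero _

lemma wt_half (s : ℝ) (k : ℤ) : wt s k = wt (s / 2) k * wt (s / 2) k := by
  rw [← wt_add]; congr 1; ring

lemma one_le_wt {a : ℝ} (h : 0 ≤ a) (k : ℤ) : 1 ≤ wt a k := by
  rw [← wt_zero k]; exact wt_mono h k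

lemma hsNorm_sq (s : ℝ) (c : FC) : hsNorm s c ^ 2 = ∑' k : ℤ, wt s k * ‖c k‖ ^ 2 :=
  Real.sq_sqrt (tsum_nonneg fun k => mul_nonneg (wt_pos s k).le (sq_nonneg _))

lemma hsNorm_nonneg (s : ℝ) (c : FC) : 0 ≤ hsNorm s c := Real.sqrt_nonneg _

/-- The weighted absolute value. -/
def wf (s : ℝ) (c : FC) (k : ℤ) : ℝ := wt (s / 2) k * ‖c k‖

lemma wf_nonneg (s : ℝ) (c : FC) (k : ℤ) : 0 ≤ wf s c k :=
  mul_nonneg (wt_pos _ _).le (norm_nonneg _)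

lemma wf_sq (s : ℝ) (c : FC) (k : ℤ) : wf s c k ^ 2 = wt s k * ‖c k‖ ^ 2 := by
  rw [wf, wt_half s]; ring

lemma memHs.wf {s : ℝ} {c : FC} (h : memHs s c) : Summable fun k => wf s c k ^ 2 := by
  simp only [wf_sq]; exact h

lemma sqrt_wf (s : ℝ) (c : FC) : Real.sqrt (∑' k, wf s c k ^ 2) = hsNorm s c := by
  simp only [wf_sq, hsNorm]

lemma memHs.mono {s t : ℝ} {c : FC} (h : memHs s c) (hts : t ≤ s) : memHs t c :=
  Summable.of_nonneg_of_le (fun k => mul_nonneg (wt_pos t k).le (sq_nonneg _))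
    (fun k => mul_le_mul_of_nonneg_right (wt_mono hts k) (sq_nonneg _)) h

lemma hsNorm_mono {s t : ℝ} {c : FC} (h : memHs s c) (hts : t ≤ s) : hsNorm t c ≤ hsNorm s c :=
  Real.sqrt_le_sqrt (Summable.tsum_le_tsum
    (fun k => mul_le_mul_of_nonneg_right (wt_mono hts k) (sq_nonneg _)) (h.mono hts) h)

lemma memHs.sub {s : ℝ} {c d : FC} (hc : memHs s c) (hd : memHs s d) : memHs s (c - d) := by
  refine Summable.of_nonneg_of_le (fun k => mul_nonneg (wt_pos s k).le (sq_nonneg _))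
    (fun k => ?_) ((hc.add hd).mul_left 2)
  have h1 : ‖(c - d) k‖ ≤ ‖c k‖ + ‖d k‖ := norm_sub_le _ _
  have h2 : ‖(c - d) k‖ ^ 2 ≤ 2 * (‖c k‖ ^ 2 + ‖d k‖ ^ 2) := by
    nlinarith [norm_nonneg ((c - d) k), sq_nonneg (‖c k‖ - ‖d k‖)]
  have := mul_le_mul_of_nonneg_left h2 (wt_pos s k).le
  linarith

lemma summable_wt_neg_one : Summable fun k : ℤ => wt (-1) k := by
  have h : Summable fun k : ℤ => 2 * (1 / ((k : ℝ) ^ 2)) + if k = 0 then (1:ℝ) else 0 := by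
    refine Summable.add ?_ (summable_of_hasFiniteSupport ?_)
    · exact (Real.summable_one_div_int_pow.2 (by norm_num)).mul_left 2
    · exact (Set.finite_singleton (0:ℤ)).subset fun k hk => by
        by_contra h0; simp at hk; exact h0 hk
  refine Summable.of_nonneg_of_le (fun k => (wt_pos _ k).le) (fun k => ?_) h
  have e : wt (-1) k = 1 / (1 + (k : ℝ) ^ 2) := by
    rw [wt, Real.rpow_neg_one, one_div]
  rw [e]
  by_cases hk : k = 0
  · subst hk; simp
  · have : (0 : ℝ) < (k : ℝ) ^ 2 := by positivity
    have h1 : 1 / (1 + (k : ℝ) ^ 2) ≤ 1 / ((k : ℝ) ^ 2) :=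
      one_div_le_one_div_of_le this (by linarith)
    have h2 : 0 < 1 / ((k : ℝ) ^ 2) := by positivity
    simp only [hk, if_false]
    linarith

/-- The embedding constant. -/
def KK : ℝ := Real.sqrt (∑' k : ℤ, wt (-1) k)

lemma KK_nonneg : 0 ≤ KK := Real.sqrt_nonneg _

lemma l1_bound {m τ : ℝ} {c : FC} (h : memHs τ c) (hm : 2 * m + 1 ≤ τ) :
    (Summable fun p => wt m p * ‖c p‖) ∧ ∑' p, wt m p * ‖c p‖ ≤ KK * hsNorm τ c := by
  have h' : memHs (2 * m + 1) c := h.mono hm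
  have s1 : Summable fun k : ℤ => wt (-1 / 2) k ^ 2 := by
    have : (fun k : ℤ => wt (-1 / 2) k ^ 2) = fun k => wt (-1) k := by
      funext k; rw [wt_half (-1) k, sq]
    rw [this]; exact summable_wt_neg_one
  have e1 : ∑' k : ℤ, wt (-1 / 2) k ^ 2 = ∑' k : ℤ, wt (-1) k := by
    congr 1; funext k; rw [wt_half (-1) k, sq]
  have := cs_tsum (fun k => (wt_pos (-1 / 2) k).le) (wf_nonneg (2 * m + 1) c) s1 h'.wf
  have e2 : ∀ k, wt (-1 / 2) k * wf (2 * m + 1) c k = wt m k * ‖c k‖ := by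
    intro k
    rw [wf, ← mul_assoc, ← wt_add]; congr 2; ring
  simp only [e2, sqrt_wf, e1] at this
  refine ⟨this.1, this.2.trans ?_⟩
  exact mul_le_mul_of_nonneg_left (hsNorm_mono h hm) KK_nonneg

lemma pt_bound {m τ : ℝ} {c : FC} (h : memHs τ c) (hm : 2 * m ≤ τ) (k : ℤ) :
    wt m k * ‖c k‖ ≤ hsNorm τ c := by
  have h1 : (wt m k * ‖c k‖) ^ 2 ≤ hsNorm τ c ^ 2 := by
    rw [hsNorm_sq]
    have a : (wt m k * ‖c k‖) ^ 2 ≤ wt τ k * ‖c k‖ ^ 2 := by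
      rw [mul_pow, sq (wt m k), ← wt_add]
      exact mul_le_mul_of_nonneg_right (wt_mono (by linarith) k) (sq_nonneg _)
    exact a.trans (h.le_tsum k fun j _ => mul_nonneg (wt_pos τ j).le (sq_nonneg _))
  exact le_of_sq_le_sq' h1 (hsNorm_nonneg _ _)
where le_of_sq_le_sq' {a b : ℝ} (h : a ^ 2 ≤ b ^ 2) (hb : 0 ≤ b) : a ≤ b :=
  abs_le_of_sq_le_sq' h hb |>.2

lemma mul_comm' (c d : FC) : mul c d = mul d c := by
  funext k
  rw [mul, mul, ← (Equiv.subLeft k).tsum_eq (fun j => d j * c (k - j))]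
  congr 1; funext j
  simp [mul_comm]

lemma summable_conv {c d : FC} {B : ℝ} (hc : Summable fun p => ‖c p‖) (hd : ∀ l, ‖d l‖ ≤ B)
    (k : ℤ) : Summable fun j => c j * d (k - j) := by
  refine Summable.of_norm_bounded (hc.mul_right B) fun j => ?_
  rw [norm_mul]
  exact mul_le_mul_of_nonneg_left (hd _) (norm_nonneg _)

lemma mul_sub_right {c d e : FC} {B B' : ℝ} (hc : Summable fun p => ‖c p‖)
    (hd : ∀ l, ‖d l‖ ≤ B) (he : ∀ l, ‖e l‖ ≤ B') : mul c (d - e) = mul c d - mul c e := by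
  funext k
  simp only [mul, Pi.sub_apply]
  rw [← (summable_conv hc hd k).tsum_sub (summable_conv hc he k)]
  congr 1; funext j; ring

lemma mul_sub_left {c d e : FC} {B : ℝ} (hc : Summable fun p => ‖c p‖)
    (hd : Summable fun p => ‖d p‖) (he : ∀ l, ‖e l‖ ≤ B) : mul (c - d) e = mul c e - mul d e := by
  funext k
  simp only [mul, Pi.sub_apply]
  rw [← (summable_conv hc he k).tsum_sub (summable_conv hd he k)]
  congr 1; funext j; ring

lemma D1_sub (c d : FC) : D1 (c - d) = D1 c - D1 d := by
  funext k; simp only [D1, Pi.sub_apply]; ring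

lemma norm_D1 (c : FC) (k : ℤ) : ‖D1 c k‖ = |(k : ℝ)| * ‖c k‖ := by
  simp [D1]

lemma abs_le_wt_one (k : ℤ) : |(k : ℝ)| ≤ wt 1 k := by rw [wt_one]; exact abs_le_jb _

lemma D1_bdd {c : FC} {B : ℝ} (h : ∀ l, wt 1 l * ‖c l‖ ≤ B) (l : ℤ) : ‖D1 c l‖ ≤ B := by
  rw [norm_D1]
  exact (mul_le_mul_of_nonneg_right (abs_le_wt_one l) (norm_nonneg _)).trans (h l)

lemma bdd_of_wt {c : FC} {B : ℝ} (h : ∀ l, wt 1 l * ‖c l‖ ≤ B) (l : ℤ) : ‖c l‖ ≤ B :=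
  (le_mul_of_one_le_left (norm_nonneg _) (one_le_wt zero_le_one l)).trans (h l)

lemma l1_of_wt {c : FC} {m : ℝ} (hm : 0 ≤ m) (h : Summable fun p => wt m p * ‖c p‖) :
    Summable fun p => ‖c p‖ :=
  Summable.of_nonneg_of_le (fun _ => norm_nonneg _)
    (fun p => le_mul_of_one_le_left (norm_nonneg _) (one_le_wt hm p)) h

end FC

namespace FC

lemma hsInner_mul {σ : ℝ} {c d w : FC}
    (hs : Summable fun x : ℤ × ℤ =>
      (wt σ x.1 : ℂ) * (c x.2 * d (x.1 - x.2) * (starRingEnd ℂ) (w x.1))) :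
    (Summable fun k : ℤ => (wt σ k : ℂ) * (mul c d k * (starRingEnd ℂ) (w k))) ∧
    hsInner σ (mul c d) w = (∑' x : ℤ × ℤ,
      (wt σ x.1 : ℂ) * (c x.2 * d (x.1 - x.2) * (starRingEnd ℂ) (w x.1))).re := by
  have e : ∀ k : ℤ, (wt σ k : ℂ) * (mul c d k * (starRingEnd ℂ) (w k)) =
      ∑' p : ℤ, (wt σ k : ℂ) * (c p * d (k - p) * (starRingEnd ℂ) (w k)) := by
    intro k
    rw [tsum_mul_left, tsum_mul_right, mul]
  constructor
  · simp only [e]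
    exact hs.prod
  · rw [hsInner, hs.tsum_prod]
    simp only [e]

lemma wt_peetre {a : ℝ} (ha : 0 ≤ a) (k p : ℤ) :
    wt a k ≤ 2 ^ a * (wt a (k - p) * wt a p) := by
  have := peetre_rpow ha (k : ℝ) ((k - p : ℤ) : ℝ)
  simp only [wt]
  convert this using 5
  push_cast; ring

lemma abs_le_wt_half (k : ℤ) : |(k : ℝ)| ≤ wt (1 / 2) k := abs_le_jb_half _

lemma product_est {σ : ℝ} (hσ : 1 ≤ σ) : ∃ C > (0 : ℝ), ∀ z w θ : FC,
    memHs (σ + 2) z → memHs σ w → memHs σ θ →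
    (Summable fun k : ℤ => (wt σ k : ℂ) * (mul w (D1 z) k * (starRingEnd ℂ) (θ k))) ∧
    |hsInner σ (mul w (D1 z)) θ| ≤ C * (hsNorm (σ + 2) z * (hsNorm σ w * hsNorm σ θ)) := by
  refine ⟨2 ^ (σ / 2) * (KK + 1), mul_pos (by positivity) (by linarith [KK_nonneg]), ?_⟩
  intro z w θ hz hw hθ
  obtain ⟨sa, ba⟩ := l1_bound (m := (σ + 1) / 2) hz (by linarith)
  obtain ⟨sY, bY⟩ := young (a := fun p => wt ((σ + 1) / 2) p * ‖z p‖)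
    (fun p => mul_nonneg (wt_pos _ _).le (norm_nonneg _)) sa (fun p => p)
    (wf_nonneg σ w) (wf_nonneg σ θ) hw.wf hθ.wf
  rw [sqrt_wf, sqrt_wf] at bY
  rw [mul_comm']
  have bd : ∀ x : ℤ × ℤ,
      ‖(wt σ x.1 : ℂ) * (D1 z x.2 * w (x.1 - x.2) * (starRingEnd ℂ) (θ x.1))‖ ≤
      2 ^ (σ / 2) * (wt ((σ + 1) / 2) x.2 * ‖z x.2‖ * (wf σ θ x.1 * wf σ w (x.1 - x.2))) := by
    rintro ⟨k, p⟩
    simp only [norm_mul, norm_D1, RCLike.norm_conj, Complex.norm_real, Real.norm_eq_abs,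
      abs_of_pos (wt_pos σ k), wf]
    have h1 := wt_peetre (by linarith : 0 ≤ σ / 2) k p
    have h2 := abs_le_wt_half p
    have e : wt ((σ + 1) / 2) p = wt (1 / 2) p * wt (σ / 2) p := by
      rw [← wt_add]; congr 1; ring
    have w1 := wt_pos (σ / 2) k
    have w2 := wt_pos (σ / 2) (k - p)
    have w3 := wt_pos (σ / 2) p
    calc wt σ k * (|(p : ℝ)| * ‖z p‖ * ‖w (k - p)‖ * ‖θ k‖)
        = wt (σ / 2) k * wt (σ / 2) k * (|(p : ℝ)| * ‖z p‖ * ‖w (k - p)‖ * ‖θ k‖) := by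
          rw [← wt_half]
      _ ≤ (2 ^ (σ / 2) * (wt (σ / 2) (k - p) * wt (σ / 2) p)) * wt (σ / 2) k *
          (wt (1 / 2) p * ‖z p‖ * ‖w (k - p)‖ * ‖θ k‖) := by gcongr
      _ = _ := by rw [e]; ring
  have sG := Summable.of_norm_bounded (sY.mul_left _) bd
  obtain ⟨h1, h2⟩ := hsInner_mul sG
  refine ⟨h1, ?_⟩
  rw [h2]
  refine (Complex.abs_re_le_norm _).trans ?_
  refine (tsum_of_norm_bounded (sY.mul_left _).hasSum bd).trans ?_
  rw [tsum_mul_left, mul_assoc]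
  gcongr
  refine bY.trans ?_
  have n1 := hsNorm_nonneg (σ + 2) z
  have n2 := hsNorm_nonneg σ w
  have n3 := hsNorm_nonneg σ θ
  calc _ ≤ (KK * hsNorm (σ + 2) z) * (hsNorm σ θ * hsNorm σ w) := by gcongr
    _ ≤ ((KK + 1) * hsNorm (σ + 2) z) * (hsNorm σ θ * hsNorm σ w) := by gcongr; linarith
    _ = _ := by ring

/-- The involution used to symmetrise the transport term. -/
def tEquiv : ℤ × ℤ ≃ ℤ × ℤ where
  toFun x := (x.1 - x.2, -x.2)
  invFun x := (x.1 - x.2, -x.2)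
  left_inv x := by ext <;> simp
  right_inv x := by ext <;> simp

lemma transport_est {σ : ℝ} (hσ : 1 ≤ σ) : ∃ C > (0 : ℝ), ∀ u w : FC,
    isReal u → memHs (σ + 2) u → memHs (σ + 1) w →
    (Summable fun k : ℤ => (wt σ k : ℂ) * (mul u (D1 w) k * (starRingEnd ℂ) (w k))) ∧
    |hsInner σ (mul u (D1 w)) w| ≤ C * (hsNorm (σ + 2) u * hsNorm σ w ^ 2) := by
  set C₁ : ℝ := (1 + 2 * σ) * 2 ^ (σ / 2) with hC₁
  have hC₁p : 0 < C₁ := by positivity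
  refine ⟨C₁ * (KK + 1), mul_pos hC₁p (by linarith [KK_nonneg]), ?_⟩
  intro u w ru hu hw1
  have hw : memHs σ w := hw1.mono (by linarith)
  obtain ⟨sa, ba⟩ := l1_bound (m := (σ + 1) / 2) hu (by linarith)
  have ha : ∀ p, 0 ≤ wt ((σ + 1) / 2) p * ‖u p‖ :=
    fun p => mul_nonneg (wt_pos _ _).le (norm_nonneg _)
  obtain ⟨sY1, -⟩ := young ha sa (fun p => p)
    (wf_nonneg (σ + 1) w) (wf_nonneg σ w) hw1.wf hw.wf
  obtain ⟨sY, bY⟩ := young ha sa (fun p => p)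
    (wf_nonneg σ w) (wf_nonneg σ w) hw.wf hw.wf
  rw [sqrt_wf] at bY
  set G : ℤ × ℤ → ℂ := fun x => (wt σ x.1 : ℂ) * (u x.2 * D1 w (x.1 - x.2) *
    (starRingEnd ℂ) (w x.1)) with hG
  have bd : ∀ x : ℤ × ℤ, ‖G x‖ ≤
      2 ^ (σ / 2) * (wt ((σ + 1) / 2) x.2 * ‖u x.2‖ *
        (wf σ w x.1 * wf (σ + 1) w (x.1 - x.2))) := by
    rintro ⟨k, p⟩
    simp only [hG, norm_mul, norm_D1, RCLike.norm_conj, Complex.norm_real, Real.norm_eq_abs,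
      abs_of_pos (wt_pos σ k), wf]
    have h1 := wt_peetre (by linarith : 0 ≤ σ / 2) k p
    have h2 := abs_le_wt_half (k - p)
    have h3 : wt (σ / 2) p ≤ wt ((σ + 1) / 2) p := wt_mono (by linarith) p
    have e : wt ((σ + 1) / 2) (k - p) = wt (1 / 2) (k - p) * wt (σ / 2) (k - p) := by
      rw [← wt_add]; congr 1; ring
    have w1 := wt_pos (σ / 2) k
    have w2 := wt_pos (σ / 2) (k - p)
    have w3 := wt_pos (σ / 2) p
    have w4 := wt_pos ((σ + 1) / 2) p
    have w5 := wt_pos (1 / 2) (k - p)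
    calc wt σ k * (‖u p‖ * (|((k - p : ℤ) : ℝ)| * ‖w (k - p)‖) * ‖w k‖)
        = wt (σ / 2) k * wt (σ / 2) k *
            (‖u p‖ * (|((k - p : ℤ) : ℝ)| * ‖w (k - p)‖) * ‖w k‖) := by
          rw [← wt_half]
      _ ≤ (2 ^ (σ / 2) * (wt (σ / 2) (k - p) * wt ((σ + 1) / 2) p)) * wt (σ / 2) k *
          (‖u p‖ * (wt (1 / 2) (k - p) * ‖w (k - p)‖) * ‖w k‖) := by
          gcongr
          exact h1.trans (by gcongr)
      _ = _ := by rw [e]; ring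
  have sG : Summable G := Summable.of_norm_bounded (sY1.mul_left _) bd
  obtain ⟨h1, h2⟩ := hsInner_mul sG
  refine ⟨h1, ?_⟩
  rw [h2, Complex.re_tsum sG]
  -- the real kernel
  set R : ℤ × ℤ → ℝ := fun x => (Complex.I * u x.2 * w (x.1 - x.2) * (starRingEnd ℂ) (w x.1)).re
    with hR
  have hGR : ∀ x, (G x).re = wt σ x.1 * ((x.1 - x.2 : ℤ) : ℝ) * R x := by
    rintro ⟨k, p⟩
    have : G (k, p) = ((wt σ k * ((k - p : ℤ) : ℝ) : ℝ) : ℂ) *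
        (Complex.I * u p * w (k - p) * (starRingEnd ℂ) (w k)) := by
      simp only [hG, D1]; push_cast; ring
    rw [this, Complex.re_ofReal_mul]
  have hRe : ∀ x, R (tEquiv x) = - R x := by
    rintro ⟨k, p⟩
    have : Complex.I * u (-p) * w (k - p - -p) * (starRingEnd ℂ) (w (k - p)) =
        - (starRingEnd ℂ) (Complex.I * u p * w (k - p) * (starRingEnd ℂ) (w k)) := by
      rw [ru p]; simp; ring
    simp only [hR, tEquiv, Equiv.coe_fn_mk]
    rw [this, Complex.neg_re, Complex.conj_re]
  have sGr : Summable fun x => (G x).re := (Complex.hasSum_re sG.hasSum).summable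
  have sGe : Summable fun x => (G (tEquiv x)).re :=
    (tEquiv.summable_iff (f := fun x => (G x).re)).2 sGr
  have e1 : ∑' x, (G (tEquiv x)).re = ∑' x, (G x).re := tEquiv.tsum_eq fun x => (G x).re
  have e2 : ∑' x, (G x).re = (1 / 2) * ∑' x, ((G x).re + (G (tEquiv x)).re) := by
    rw [sGr.tsum_add sGe, e1]; ring
  have bd2 : ∀ x : ℤ × ℤ, ‖(G x).re + (G (tEquiv x)).re‖ ≤
      C₁ * (wt ((σ + 1) / 2) x.2 * ‖u x.2‖ * (wf σ w x.1 * wf σ w (x.1 - x.2))) := by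
    rintro ⟨k, p⟩
    rw [hGR, hGR, hRe]
    have e : wt σ k * ((k - p : ℤ) : ℝ) * R (k, p) + wt σ (tEquiv (k, p)).1 *
        (((tEquiv (k, p)).1 - (tEquiv (k, p)).2 : ℤ) : ℝ) * -R (k, p) =
        (((k - p : ℤ) : ℝ) * (1 + (k : ℝ) ^ 2) ^ σ -
          (k : ℝ) * (1 + ((k - p : ℤ) : ℝ) ^ 2) ^ σ) * R (k, p) := by
      simp only [tEquiv, Equiv.coe_fn_mk, wt]; push_cast; ring
    have hRb : |R (k, p)| ≤ ‖u p‖ * ‖w (k - p)‖ * ‖w k‖ := by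
      refine (Complex.abs_re_le_norm _).trans ?_
      simp
    have cb := comm_bound hσ (k : ℝ) ((k - p : ℤ) : ℝ)
    rw [e, Real.norm_eq_abs, abs_mul]
    refine (mul_le_mul cb hRb (abs_nonneg _) (by positivity)).trans (le_of_eq ?_)
    have e3 : (1 + ((k : ℝ) - ((k - p : ℤ) : ℝ)) ^ 2) ^ ((σ + 1) / 2) = wt ((σ + 1) / 2) p := by
      rw [wt]; congr 3; push_cast; ring
    rw [e3]
    simp only [wf, wt]
    ring
  have := tsum_of_norm_bounded (sY.mul_left _).hasSum bd2
  rw [Real.norm_eq_abs, tsum_mul_left] at this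
  rw [e2, abs_mul, abs_of_pos (by norm_num : (0:ℝ) < 1 / 2)]
  have n1 := hsNorm_nonneg (σ + 2) u
  have n2 := hsNorm_nonneg σ w
  have n3 := KK_nonneg
  have b3 : (∑' p, wt ((σ + 1) / 2) p * ‖u p‖) * (hsNorm σ w * hsNorm σ w) ≤
      (KK + 1) * hsNorm (σ + 2) u * hsNorm σ w ^ 2 := by
    rw [sq]
    calc _ ≤ (KK * hsNorm (σ + 2) u) * (hsNorm σ w * hsNorm σ w) := by gcongr
      _ ≤ ((KK + 1) * hsNorm (σ + 2) u) * (hsNorm σ w * hsNorm σ w) := by gcongr; linarith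
  have b4 := this.trans (mul_le_mul_of_nonneg_left (bY.trans b3) hC₁p.le)
  have b5 : 0 ≤ C₁ * ((KK + 1) * hsNorm (σ + 2) u * hsNorm σ w ^ 2) := by positivity
  nlinarith [abs_nonneg (∑' x, ((G x).re + (G (tEquiv x)).re))]

end FC

namespace FC

lemma lie_eq {ξ f : FC} {B : ℝ} (hξ : Summable fun p => wt 1 p * ‖ξ p‖) (hf : ∀ l, ‖f l‖ ≤ B) :
    lie ξ f = D1 (mul ξ f) := by
  funext k
  have l1 : Summable fun p => ‖ξ p‖ := l1_of_wt zero_le_one hξ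
  have l1D : Summable fun p => ‖D1 ξ p‖ :=
    Summable.of_nonneg_of_le (fun _ => norm_nonneg _) (fun p => by
      rw [norm_D1]; exact mul_le_mul_of_nonneg_right (abs_le_wt_one p) (norm_nonneg _)) hξ
  have s1 := (summable_conv l1 hf k).mul_left (Complex.I * (k : ℂ))
  have s2 := summable_conv l1D hf k
  have e : mul ξ (D1 f) k = ∑' j, (Complex.I * (k : ℂ) * (ξ j * f (k - j)) - D1 ξ j * f (k - j)) := by
    rw [mul]; congr 1; funext j
    simp only [D1]; push_cast; ring
  rw [lie, Pi.add_apply, e, s1.tsum_sub s2, tsum_mul_left, D1]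
  simp only [mul]
  ring

lemma lie_bdd {ξ f : FC} {B : ℝ} (hξ : Summable fun p => wt 1 p * ‖ξ p‖)
    (hf : ∀ l, wt 1 l * ‖f l‖ ≤ B) (k : ℤ) :
    ‖lie ξ f k‖ ≤ 2 * ((∑' p, wt 1 p * ‖ξ p‖) * B) := by
  rw [lie_eq hξ (bdd_of_wt hf), norm_D1]
  have l1 : Summable fun p => ‖ξ p‖ := l1_of_wt zero_le_one hξ
  have h1 : |(k : ℝ)| * ‖mul ξ f k‖ = ‖∑' p, (k : ℂ) * (ξ p * f (k - p))‖ := by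
    rw [tsum_mul_left, norm_mul, mul]; simp
  rw [h1]
  have := tsum_of_norm_bounded (f := fun p => (k : ℂ) * (ξ p * f (k - p)))
    ((hξ.mul_right B).mul_left 2).hasSum ?_
  · rw [← tsum_mul_right, ← tsum_mul_left]
    exact this
  · intro p
    have h2 := wt_peetre (zero_le_one) k p
    rw [Real.rpow_one] at h2
    have h3 : |(k : ℝ)| ≤ 2 * (wt 1 (k - p) * wt 1 p) := (abs_le_wt_one k).trans h2
    have w1 := wt_pos 1 p
    calc ‖(k : ℂ) * (ξ p * f (k - p))‖ = |(k : ℝ)| * (‖ξ p‖ * ‖f (k - p)‖) := by simp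
      _ ≤ 2 * (wt 1 (k - p) * wt 1 p) * (‖ξ p‖ * ‖f (k - p)‖) := by gcongr
      _ = 2 * (wt 1 p * ‖ξ p‖ * (wt 1 (k - p) * ‖f (k - p)‖)) := by ring
      _ ≤ _ := by gcongr; exact hf _

lemma lie_apply {ξ f : FC} {B : ℝ} (hξ : Summable fun p => wt 1 p * ‖ξ p‖)
    (hf : ∀ l, ‖f l‖ ≤ B) (k : ℤ) :
    lie ξ f k = Complex.I * (k : ℂ) * ∑' p, ξ p * f (k - p) := by
  rw [lie_eq hξ hf]; rfl

lemma lie2_apply {ξ f : FC} {B : ℝ} (hξ : Summable fun p => wt 1 p * ‖ξ p‖)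
    (hf : ∀ l, wt 1 l * ‖f l‖ ≤ B) (k : ℤ) :
    lie2 ξ f k = ∑' p, ∑' q, -((k : ℂ) * ((k - p : ℤ) : ℂ)) * (ξ p * ξ q * f (k - (p + q))) := by
  rw [lie2, lie_apply hξ (lie_bdd hξ hf), ← tsum_mul_left]
  congr 1; funext p
  rw [lie_apply hξ (bdd_of_wt hf), ← tsum_mul_left, ← tsum_mul_left, ← tsum_mul_left]
  congr 1; funext q
  rw [sub_sub]
  linear_combination (k : ℂ) * ((k - p : ℤ) : ℂ) * (ξ p * ξ q * f (k - (p + q))) * Complex.I_sq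

lemma lie_sub {ξ f g : FC} {B B' : ℝ} (hξ : Summable fun p => wt 1 p * ‖ξ p‖)
    (hf : ∀ l, ‖f l‖ ≤ B) (hg : ∀ l, ‖g l‖ ≤ B') : lie ξ (f - g) = lie ξ f - lie ξ g := by
  have hfg : ∀ l, ‖(f - g) l‖ ≤ B + B' := fun l =>
    (norm_sub_le _ _).trans (add_le_add (hf l) (hg l))
  rw [lie_eq hξ hf, lie_eq hξ hg, lie_eq hξ hfg, mul_sub_right (l1_of_wt zero_le_one hξ) hf hg,
    D1_sub]

lemma lie2_sub {ξ f g : FC} {B B' : ℝ} (hξ : Summable fun p => wt 1 p * ‖ξ p‖)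
    (hf : ∀ l, wt 1 l * ‖f l‖ ≤ B) (hg : ∀ l, wt 1 l * ‖g l‖ ≤ B') :
    lie2 ξ (f - g) = lie2 ξ f - lie2 ξ g := by
  rw [lie2, lie_sub hξ (bdd_of_wt hf) (bdd_of_wt hg), lie_sub hξ (lie_bdd hξ hf) (lie_bdd hξ hg)]
  rfl

lemma lie2_norm {ξ f : FC} {B : ℝ} (hξ : Summable fun p => wt 1 p * ‖ξ p‖)
    (hf : ∀ l, wt 1 l * ‖f l‖ ≤ B) (k : ℤ) :
    ‖lie2 ξ f k‖ ≤ |(k : ℝ)| * (2 * B) * (∑' p, wt 1 p * ‖ξ p‖) ^ 2 := by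
  have hb := lie_bdd hξ hf
  rw [lie2, lie_eq hξ hb, norm_D1]
  have l1 : Summable fun p => ‖ξ p‖ := l1_of_wt zero_le_one hξ
  set A := ∑' p, wt 1 p * ‖ξ p‖ with hA
  have hA' : ∑' p, ‖ξ p‖ ≤ A := Summable.tsum_le_tsum
    (fun p => le_mul_of_one_le_left (norm_nonneg _) (one_le_wt zero_le_one p)) l1 hξ
  have h0 : 0 ≤ 2 * (A * B) := (norm_nonneg _).trans (hb 0)
  have := tsum_of_norm_bounded (f := fun p => ξ p * lie ξ f (k - p))
    (l1.mul_right (2 * (A * B))).hasSum (fun p => by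
      rw [norm_mul]; exact mul_le_mul_of_nonneg_left (hb _) (norm_nonneg _))
  rw [tsum_mul_right] at this
  have h2 : ‖mul ξ (lie ξ f) k‖ ≤ A * (2 * (A * B)) := by
    rw [mul]; exact this.trans (mul_le_mul_of_nonneg_right hA' h0)
  calc _ ≤ |(k : ℝ)| * (A * (2 * (A * B))) := by gcongr
    _ = _ := by ring

lemma tsumFC_lie2_sub {ξ : ℕ → FC} {f g : FC} {B B' : ℝ}
    (hξ : ∀ n, Summable fun p => wt 1 p * ‖ξ n p‖)
    (hsq : Summable fun n => (∑' p, wt 1 p * ‖ξ n p‖) ^ 2)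
    (hf : ∀ l, wt 1 l * ‖f l‖ ≤ B) (hg : ∀ l, wt 1 l * ‖g l‖ ≤ B') :
    (tsumFC fun n => lie2 (ξ n) (f - g)) =
      (tsumFC fun n => lie2 (ξ n) f) - tsumFC fun n => lie2 (ξ n) g := by
  funext k
  simp only [tsumFC, Pi.sub_apply]
  have s1 : Summable fun n => lie2 (ξ n) f k :=
    Summable.of_norm_bounded (hsq.mul_left _) fun n => lie2_norm (hξ n) hf k
  have s2 : Summable fun n => lie2 (ξ n) g k :=
    Summable.of_norm_bounded (hsq.mul_left _) fun n => lie2_norm (hξ n) hg k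
  rw [← s1.tsum_sub s2]
  congr 1; funext n
  rw [lie2_sub (hξ n) hf hg]; rfl

lemma noise_l1 {ξ : ℕ → FC} (hξmem : ∀ σ : ℝ, 0 ≤ σ → ∀ k : ℕ, FC.memHs σ (ξ k))
    {m : ℝ} (hm : 0 ≤ m) (n : ℕ) : Summable fun p => wt m p * ‖ξ n p‖ :=
  (l1_bound (hξmem (2 * m + 1) (by linarith) n) le_rfl).1

lemma noise_sq {ξ : ℕ → FC} (hξmem : ∀ σ : ℝ, 0 ≤ σ → ∀ k : ℕ, FC.memHs σ (ξ k))
    (hξsum : ∀ σ : ℝ, 0 ≤ σ → Summable fun k : ℕ => FC.hsNorm σ (ξ k))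
    {m : ℝ} (hm : 0 ≤ m) : Summable fun n => (∑' p, wt m p * ‖ξ n p‖) ^ 2 := by
  have h1 := (hξsum (2 * m + 1) (by linarith)).mul_left KK
  have h2 : Summable fun n => ∑' p, wt m p * ‖ξ n p‖ := by
    refine Summable.of_nonneg_of_le (fun n => tsum_nonneg fun p =>
      mul_nonneg (wt_pos _ _).le (norm_nonneg _)) (fun n => ?_) h1
    exact (l1_bound (hξmem (2 * m + 1) (by linarith) n) le_rfl).2
  have h0 : ∀ n, 0 ≤ ∑' p, wt m p * ‖ξ n p‖ := fun n => tsum_nonneg fun p =>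
      mul_nonneg (wt_pos _ _).le (norm_nonneg _)
  refine Summable.of_nonneg_of_le (fun n => sq_nonneg _) (fun n => ?_)
    (h2.mul_left (∑' n, ∑' p, wt m p * ‖ξ n p‖))
  rw [sq]
  exact mul_le_mul_of_nonneg_right (h2.le_tsum n fun j _ => h0 j) (h0 n)

lemma noise_a {ξ : ℕ → FC} (hξmem : ∀ σ : ℝ, 0 ≤ σ → ∀ k : ℕ, FC.memHs σ (ξ k))
    (hξsum : ∀ σ : ℝ, 0 ≤ σ → Summable fun k : ℕ => FC.hsNorm σ (ξ k))
    {m : ℝ} (hm : 0 ≤ m) : Summable fun y : ℕ × ℤ × ℤ =>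
      (wt m y.2.1 * ‖ξ y.1 y.2.1‖) * (wt m y.2.2 * ‖ξ y.1 y.2.2‖) := by
  have h0 : ∀ n p, 0 ≤ wt m p * ‖ξ n p‖ := fun n p => mul_nonneg (wt_pos _ _).le (norm_nonneg _)
  have hs : ∀ n, Summable fun z : ℤ × ℤ => (wt m z.1 * ‖ξ n z.1‖) * (wt m z.2 * ‖ξ n z.2‖) :=
    fun n => (noise_l1 hξmem hm n).mul_of_nonneg (noise_l1 hξmem hm n) (h0 n) (h0 n)
  rw [summable_prod_of_nonneg (fun y => mul_nonneg (h0 _ _) (h0 _ _))]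
  refine ⟨hs, ?_⟩
  refine (noise_sq hξmem hξsum hm).congr fun n => ?_
  rw [sq, Summable.tsum_mul_tsum (noise_l1 hξmem hm n) (noise_l1 hξmem hm n) (hs n)]

end FC

namespace FC

/-- First symmetry of the quadruple sum. -/
def eA : ℤ × ℕ × ℤ × ℤ ≃ ℤ × ℕ × ℤ × ℤ where
  toFun x := (x.1 - (x.2.2.1 + x.2.2.2), x.2.1, -x.2.2.2, -x.2.2.1)
  invFun x := (x.1 - (x.2.2.1 + x.2.2.2), x.2.1, -x.2.2.2, -x.2.2.1)
  left_inv := by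
    rintro ⟨k, n, p, q⟩
    simp only [Prod.mk.injEq, neg_neg, and_true]
    ring
  right_inv := by
    rintro ⟨k, n, p, q⟩
    simp only [Prod.mk.injEq, neg_neg, and_true]
    ring

/-- Second symmetry of the quadruple sum. -/
def eB : ℤ × ℕ × ℤ × ℤ ≃ ℤ × ℕ × ℤ × ℤ where
  toFun x := (x.1, x.2.1, x.2.2.2, x.2.2.1)
  invFun x := (x.1, x.2.1, x.2.2.2, x.2.2.1)
  left_inv := fun _ => rfl
  right_inv := fun _ => rfl

/-- Reindexing for the quadratic variation term. -/
def eE : ℕ × ℤ × ℤ × ℤ ≃ ℤ × ℕ × ℤ × ℤ where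
  toFun x := (x.2.1 + x.2.2.2, x.1, x.2.2.2, x.2.2.1)
  invFun x := (x.2.1, x.1 - x.2.2.1, x.2.2.2, x.2.2.1)
  left_inv := by rintro ⟨n, m, q, p⟩; simp
  right_inv := by rintro ⟨k, n, p, q⟩; simp

/-- The quartic kernel. -/
def TT (ξ : ℕ → FC) (f : FC) (x : ℤ × ℕ × ℤ × ℤ) : ℂ :=
  ξ x.2.1 x.2.2.1 * ξ x.2.1 x.2.2.2 * f (x.1 - (x.2.2.1 + x.2.2.2)) * (starRingEnd ℂ) (f x.1)

lemma norm_TT (ξ : ℕ → FC) (f : FC) (k : ℤ) (n : ℕ) (p q : ℤ) :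
    ‖TT ξ f (k, n, p, q)‖ = ‖ξ n p‖ * ‖ξ n q‖ * ‖f (k - (p + q))‖ * ‖f k‖ := by
  simp [TT]

lemma TT_eA (ξ : ℕ → FC) (hξ : ∀ k : ℕ, isReal (ξ k)) (f : FC) (x : ℤ × ℕ × ℤ × ℤ) :
    (TT ξ f (eA x)).re = (TT ξ f x).re := by
  obtain ⟨k, n, p, q⟩ := x
  have : TT ξ f (eA (k, n, p, q)) = (starRingEnd ℂ) (TT ξ f (k, n, p, q)) := by
    simp only [TT, eA, Equiv.coe_fn_mk, hξ n p, hξ n q, map_mul, Complex.conj_conj]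
    rw [show k - (p + q) - (-q + -p) = k by ring]
    ring
  rw [this, Complex.conj_re]

lemma TT_eB (ξ : ℕ → FC) (f : FC) (x : ℤ × ℕ × ℤ × ℤ) :
    TT ξ f (eB x) = TT ξ f x := by
  obtain ⟨k, n, p, q⟩ := x
  simp only [TT, eB, Equiv.coe_fn_mk]
  rw [add_comm q p]; ring

/-- Drift kernel. -/
def GG1 (σ : ℝ) (ξ : ℕ → FC) (f : FC) (x : ℤ × ℕ × ℤ × ℤ) : ℂ :=
  ((-((x.1 : ℝ) * ((x.1 : ℝ) - x.2.2.1) * (1 + (x.1 : ℝ) ^ 2) ^ σ) : ℝ) : ℂ) * TT ξ f x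

/-- Quadratic variation kernel. -/
def GG2 (σ : ℝ) (ξ : ℕ → FC) (f : FC) (x : ℤ × ℕ × ℤ × ℤ) : ℂ :=
  ((phi σ ((x.1 : ℝ) - x.2.2.1) : ℝ) : ℂ) * TT ξ f x

lemma kern_bound {ξ : ℕ → FC} {f : FC} {a M W C : ℝ} {k : ℤ} {n : ℕ} {p q : ℤ}
    (h : |W| ≤ C * (((1 + (p : ℝ) ^ 2) * (1 + (q : ℝ) ^ 2)) ^ M *
      ((1 + (k : ℝ) ^ 2) ^ (a / 2) * (1 + ((k : ℝ) - p - q) ^ 2) ^ (a / 2)))) :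
    |W| * ‖TT ξ f (k, n, p, q)‖ ≤ C * (((wt M p * ‖ξ n p‖) * (wt M q * ‖ξ n q‖)) *
      (wf a f k * wf a f (k - (p + q)))) := by
  rw [norm_TT]
  refine (mul_le_mul_of_nonneg_right h (by positivity)).trans (le_of_eq ?_)
  rw [Real.mul_rpow (jb_pos _).le (jb_pos _).le]
  have e : ((k - (p + q) : ℤ) : ℝ) = (k : ℝ) - p - q := by push_cast; ring
  simp only [wf, wt, e]
  ring

section
variable {σ : ℝ} {ξ : ℕ → FC} {f : FC}

lemma lie_sq_apply {B : ℝ} (hξ1 : ∀ n, Summable fun p => wt 1 p * ‖ξ n p‖)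
    (hξreal : ∀ k : ℕ, isReal (ξ k)) (hf : ∀ l, ‖f l‖ ≤ B) (n : ℕ) (m : ℤ) :
    ((wt σ m * ‖lie (ξ n) f m‖ ^ 2 : ℝ) : ℂ) =
      ∑' q : ℤ, ∑' p : ℤ, GG2 σ ξ f (eE (n, m, q, p)) := by
  have e1 : (starRingEnd ℂ) (∑' q, ξ n q * f (m - q)) =
      ∑' p, ξ n p * (starRingEnd ℂ) (f (m + p)) := by
    rw [Complex.conj_tsum, ← (Equiv.neg ℤ).tsum_eq]
    congr 1; funext p
    simp only [Equiv.neg_apply, map_mul, hξreal n p, Complex.conj_conj, sub_neg_eq_add]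
  have e2 : ((‖lie (ξ n) f m‖ ^ 2 : ℝ) : ℂ) = (((m : ℝ) ^ 2 : ℝ) : ℂ) *
      ((∑' q, ξ n q * f (m - q)) * ∑' p, ξ n p * (starRingEnd ℂ) (f (m + p))) := by
    rw [← e1, Complex.mul_conj, lie_apply (hξ1 n) hf, norm_mul, Complex.normSq_eq_norm_sq]
    simp only [norm_mul, Complex.norm_I, Complex.norm_intCast, one_mul, mul_pow, sq_abs]
    push_cast; ring
  rw [Complex.ofReal_mul, e2, ← tsum_mul_right, ← tsum_mul_left, ← tsum_mul_left]
  congr 1; funext q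
  rw [← tsum_mul_left, ← tsum_mul_left, ← tsum_mul_left]
  congr 1; funext p
  simp only [GG2, TT, eE, Equiv.coe_fn_mk, phi, wt]
  rw [show m + p - (p + q) = m - q by ring,
    show ((m + p : ℤ) : ℝ) - (p : ℝ) = (m : ℝ) by push_cast; ring]
  push_cast; ring

lemma drift_apply {B : ℝ} (hξ1 : ∀ n, Summable fun p => wt 1 p * ‖ξ n p‖)
    (hf : ∀ l, wt 1 l * ‖f l‖ ≤ B) (k : ℤ) :
    (wt σ k : ℂ) * (tsumFC (fun n => lie2 (ξ n) f) k * (starRingEnd ℂ) (f k)) =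
      ∑' n : ℕ, ∑' p : ℤ, ∑' q : ℤ, GG1 σ ξ f (k, n, p, q) := by
  rw [tsumFC, ← tsum_mul_right, ← tsum_mul_left]
  congr 1; funext n
  rw [lie2_apply (hξ1 n) hf, ← tsum_mul_right, ← tsum_mul_left]
  congr 1; funext p
  rw [← tsum_mul_right, ← tsum_mul_left]
  congr 1; funext q
  simp only [GG1, TT, wt]
  push_cast; ring

end

theorem noise_est {σ : ℝ} (hσ : 1 ≤ σ) (ξ : ℕ → FC)
    (hξmem : ∀ σ : ℝ, 0 ≤ σ → ∀ k : ℕ, FC.memHs σ (ξ k))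
    (hξreal : ∀ k : ℕ, FC.isReal (ξ k))
    (hξsum : ∀ σ : ℝ, 0 ≤ σ → Summable fun k : ℕ => FC.hsNorm σ (ξ k)) :
    ∃ C > (0 : ℝ), ∀ f : FC, memHs (σ + 2) f →
      (Summable fun k : ℤ => (wt σ k : ℂ) *
        (tsumFC (fun n => lie2 (ξ n) f) k * (starRingEnd ℂ) (f k))) ∧
      (Summable fun n : ℕ => ∑' m : ℤ, wt σ m * ‖lie (ξ n) f m‖ ^ 2) ∧
      hsInner σ (tsumFC fun n => lie2 (ξ n) f) f +
        ∑' n : ℕ, ∑' m : ℤ, wt σ m * ‖lie (ξ n) f m‖ ^ 2 ≤ C * hsNorm σ f ^ 2 := by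
  obtain ⟨C₀, hC₀, hW⟩ := W_bound hσ
  have sa := noise_a hξmem hξsum (by linarith : 0 ≤ σ + 2)
  set a : ℕ × ℤ × ℤ → ℝ := fun y =>
    (wt (σ + 2) y.2.1 * ‖ξ y.1 y.2.1‖) * (wt (σ + 2) y.2.2 * ‖ξ y.1 y.2.2‖) with ha_def
  have ha : ∀ y, 0 ≤ a y := fun y => mul_nonneg (mul_nonneg (wt_pos _ _).le (norm_nonneg _))
    (mul_nonneg (wt_pos _ _).le (norm_nonneg _))
  have hA : 0 ≤ ∑' y, a y := tsum_nonneg ha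
  refine ⟨C₀ * (∑' y, a y + 1), by positivity, ?_⟩
  intro f hf2
  have hf1 : memHs (σ + 1) f := hf2.mono (by linarith)
  have hf : memHs σ f := hf2.mono (by linarith)
  have hξ1 : ∀ n, Summable fun p => wt 1 p * ‖ξ n p‖ := noise_l1 hξmem zero_le_one
  have hfb : ∀ l, wt 1 l * ‖f l‖ ≤ hsNorm (σ + 2) f := pt_bound hf2 (by linarith)
  obtain ⟨sY1, -⟩ := young ha sa (fun y => y.2.1 + y.2.2)
    (wf_nonneg (σ + 1) f) (wf_nonneg (σ + 1) f) hf1.wf hf1.wf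
  obtain ⟨sY, bY⟩ := young ha sa (fun y => y.2.1 + y.2.2)
    (wf_nonneg σ f) (wf_nonneg σ f) hf.wf hf.wf
  rw [sqrt_wf] at bY
  have s1 : Summable (GG1 σ ξ f) := by
    refine Summable.of_norm_bounded (sY1.mul_left (5 * 16 ^ (σ + 1))) ?_
    rintro ⟨k, n, p, q⟩
    rw [GG1, norm_mul, Complex.norm_real, Real.norm_eq_abs, abs_neg]
    exact kern_bound (crude_kj hσ (k : ℝ) p q)
  have s2 : Summable (GG2 σ ξ f) := by
    refine Summable.of_norm_bounded (sY1.mul_left (16 ^ (σ + 1))) ?_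
    rintro ⟨k, n, p, q⟩
    rw [GG2, norm_mul, Complex.norm_real, Real.norm_eq_abs]
    exact kern_bound (crude_phi hσ (k : ℝ) p q)
  -- the drift term
  have d1 : ∀ k : ℤ, (wt σ k : ℂ) *
      (tsumFC (fun n => lie2 (ξ n) f) k * (starRingEnd ℂ) (f k)) =
      ∑' y : ℕ × ℤ × ℤ, GG1 σ ξ f (k, y) := by
    intro k
    have t1 : Summable fun y : ℕ × ℤ × ℤ => GG1 σ ξ f (k, y) := s1.prod_factor k
    rw [drift_apply hξ1 hfb k, t1.tsum_prod]
    congr 1; funext n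
    have t2 : Summable fun z : ℤ × ℤ => GG1 σ ξ f (k, n, z) := t1.prod_factor n
    rw [t2.tsum_prod]
  have d2 : hsInner σ (tsumFC fun n => lie2 (ξ n) f) f = ∑' x, (GG1 σ ξ f x).re := by
    rw [hsInner, ← Complex.re_tsum s1, s1.tsum_prod]
    simp only [d1]
  have d3 : Summable fun k : ℤ => (wt σ k : ℂ) *
        (tsumFC (fun n => lie2 (ξ n) f) k * (starRingEnd ℂ) (f k)) := by
    simp only [d1]; exact s1.prod
  -- the quadratic variation term
  have s2E : Summable fun x => GG2 σ ξ f (eE x) := (eE.summable_iff (f := GG2 σ ξ f)).2 s2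
  have q1 : ∀ n : ℕ, ((∑' m : ℤ, wt σ m * ‖lie (ξ n) f m‖ ^ 2 : ℝ) : ℂ) =
      ∑' y : ℤ × ℤ × ℤ, GG2 σ ξ f (eE (n, y)) := by
    intro n
    have t1 : Summable fun y : ℤ × ℤ × ℤ => GG2 σ ξ f (eE (n, y)) := s2E.prod_factor n
    rw [t1.tsum_prod, Complex.ofReal_tsum]
    congr 1; funext m
    have t2 : Summable fun z : ℤ × ℤ => GG2 σ ξ f (eE (n, m, z)) := t1.prod_factor m
    rw [t2.tsum_prod]
    exact lie_sq_apply hξ1 hξreal (bdd_of_wt hfb) n m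
  have q2 : Summable fun n : ℕ => ∑' m : ℤ, wt σ m * ‖lie (ξ n) f m‖ ^ 2 := by
    rw [← Complex.summable_ofReal]
    simp only [q1]
    exact s2E.prod
  have q3 : ∑' n : ℕ, ∑' m : ℤ, wt σ m * ‖lie (ξ n) f m‖ ^ 2 = ∑' x, (GG2 σ ξ f x).re := by
    have : ((∑' n : ℕ, ∑' m : ℤ, wt σ m * ‖lie (ξ n) f m‖ ^ 2 : ℝ) : ℂ) =
        ∑' x, GG2 σ ξ f x := by
      rw [Complex.ofReal_tsum, ← eE.tsum_eq (GG2 σ ξ f), s2E.tsum_prod]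
      simp only [q1]
    rw [← Complex.re_tsum s2, ← this, Complex.ofReal_re]
  refine ⟨d3, q2, ?_⟩
  have r1 : Summable fun x => (GG1 σ ξ f x).re := (Complex.hasSum_re s1.hasSum).summable
  have r2 : Summable fun x => (GG2 σ ξ f x).re := (Complex.hasSum_re s2.hasSum).summable
  rw [d2, q3, ← r1.tsum_add r2]
  set H : ℤ × ℕ × ℤ × ℤ → ℝ := fun x => (GG1 σ ξ f x).re + (GG2 σ ξ f x).re with hH
  have sH : Summable H := r1.add r2
  have sHA : Summable fun x => H (eA x) := (eA.summable_iff (f := H)).2 sH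
  have eHA : ∑' x, H (eA x) = ∑' x, H x := eA.tsum_eq H
  set H2 : ℤ × ℕ × ℤ × ℤ → ℝ := fun x => H x + H (eA x) with hH2
  have sH2 : Summable H2 := sH.add sHA
  have sH2B : Summable fun x => H2 (eB x) := (eB.summable_iff (f := H2)).2 sH2
  have eH2B : ∑' x, H2 (eB x) = ∑' x, H2 x := eB.tsum_eq H2
  have eH2 : ∑' x, H2 x = 2 * ∑' x, H x := by
    rw [hH2, sH.tsum_add sHA, eHA]; ring
  have e4 : ∑' x, (H2 x + H2 (eB x)) = 4 * ∑' x, H x := by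
    rw [sH2.tsum_add sH2B, eH2B, eH2]; ring
  have hHx : ∀ x, H x = (phi σ ((x.1 : ℝ) - x.2.2.1) -
      (x.1 : ℝ) * ((x.1 : ℝ) - x.2.2.1) * (1 + (x.1 : ℝ) ^ 2) ^ σ) * (TT ξ f x).re := by
    intro x
    simp only [hH, GG1, GG2, Complex.re_ofReal_mul]
    ring
  have hH2x : ∀ (k : ℤ) (n : ℕ) (p q : ℤ), H2 (k, n, p, q) = (2 * phi σ ((k : ℝ) - p) -
      ((k : ℝ) - p) * ((k : ℝ) * (1 + (k : ℝ) ^ 2) ^ σ +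
        ((k : ℝ) - p - q) * (1 + ((k : ℝ) - p - q) ^ 2) ^ σ)) * (TT ξ f (k, n, p, q)).re := by
    intro k n p q
    simp only [hH2, hHx, TT_eA ξ hξreal]
    have c1 : (((eA (k, n, p, q)).1 : ℤ) : ℝ) = (k : ℝ) - p - q := by
      simp only [eA, Equiv.coe_fn_mk]; push_cast; ring
    have c2 : (((eA (k, n, p, q)).2.2.1 : ℤ) : ℝ) = -(q : ℝ) := by
      simp only [eA, Equiv.coe_fn_mk]; push_cast; ring
    rw [c1, c2, show (k : ℝ) - p - q - -(q : ℝ) = (k : ℝ) - p by ring]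
    ring
  have bd : ∀ x : ℤ × ℕ × ℤ × ℤ, ‖H2 x + H2 (eB x)‖ ≤ C₀ * (a x.2 *
      (wf σ f x.1 * wf σ f (x.1 - (x.2.2.1 + x.2.2.2)))) := by
    rintro ⟨k, n, p, q⟩
    have hB : H2 (eB (k, n, p, q)) = (2 * phi σ ((k : ℝ) - q) -
      ((k : ℝ) - q) * ((k : ℝ) * (1 + (k : ℝ) ^ 2) ^ σ +
        ((k : ℝ) - p - q) * (1 + ((k : ℝ) - p - q) ^ 2) ^ σ)) * (TT ξ f (k, n, p, q)).re := by
      have := hH2x k n q p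
      have t := TT_eB ξ f (k, n, p, q)
      simp only [eB, Equiv.coe_fn_mk] at t ⊢
      rw [this, t, show (k : ℝ) - q - p = (k : ℝ) - p - q by ring]
    have e : H2 (k, n, p, q) + H2 (eB (k, n, p, q)) =
        (2 * (phi σ ((k : ℝ) - p) + phi σ ((k : ℝ) - q)) - ((k : ℝ) + ((k : ℝ) - p - q)) *
        ((k : ℝ) * (1 + (k : ℝ) ^ 2) ^ σ + ((k : ℝ) - p - q) *
          (1 + ((k : ℝ) - p - q) ^ 2) ^ σ)) * (TT ξ f (k, n, p, q)).re := by
      rw [hB, hH2x]; ring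
    rw [e, Real.norm_eq_abs, abs_mul]
    refine (mul_le_mul_of_nonneg_left (Complex.abs_re_le_norm _) (abs_nonneg _)).trans ?_
    exact kern_bound (hW (k : ℝ) p q)
  have fin := tsum_of_norm_bounded (sY.mul_left C₀).hasSum bd
  rw [tsum_mul_left, e4, Real.norm_eq_abs] at fin
  have g1 : C₀ * ∑' x : ℤ × ℕ × ℤ × ℤ, a x.2 *
      (wf σ f x.1 * wf σ f (x.1 - (x.2.2.1 + x.2.2.2))) ≤
      C₀ * ((∑' y, a y) * (hsNorm σ f * hsNorm σ f)) := mul_le_mul_of_nonneg_left bY hC₀.le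
  have g2 : 0 ≤ hsNorm σ f * hsNorm σ f := mul_self_nonneg _
  have g3 : C₀ * ((∑' y, a y) * (hsNorm σ f * hsNorm σ f)) ≤
      C₀ * (∑' y, a y + 1) * hsNorm σ f ^ 2 := by nlinarith [mul_nonneg hC₀.le g2]
  have g4 : 0 ≤ C₀ * (∑' y, a y + 1) * hsNorm σ f ^ 2 := by positivity
  have g5 := le_abs_self (4 * ∑' x, H x)
  linarith

end FC

namespace FC

lemma hsInner_comb {σ : ℝ} {X Y Z w : FC}
    (hX : Summable fun k : ℤ => (wt σ k : ℂ) * (X k * (starRingEnd ℂ) (w k)))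
    (hY : Summable fun k : ℤ => (wt σ k : ℂ) * (Y k * (starRingEnd ℂ) (w k)))
    (hZ : Summable fun k : ℤ => (wt σ k : ℂ) * (Z k * (starRingEnd ℂ) (w k))) :
    hsInner σ (-X - Y + (1 / 2 : ℝ) • Z) w =
      -hsInner σ X w - hsInner σ Y w + (1 / 2) * hsInner σ Z w := by
  have e : ∀ k : ℤ, (wt σ k : ℂ) * ((-X - Y + (1 / 2 : ℝ) • Z) k * (starRingEnd ℂ) (w k)) =
      -((wt σ k : ℂ) * (X k * (starRingEnd ℂ) (w k))) -
      (wt σ k : ℂ) * (Y k * (starRingEnd ℂ) (w k)) +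
      ((1 / 2 : ℝ) : ℂ) * ((wt σ k : ℂ) * (Z k * (starRingEnd ℂ) (w k))) := by
    intro k
    simp only [Pi.add_apply, Pi.sub_apply, Pi.neg_apply, Pi.smul_apply, Complex.real_smul]
    ring
  simp only [hsInner, e]
  rw [(hX.neg.sub hY).tsum_add (hZ.mul_left _), hX.neg.tsum_sub hY, tsum_neg, tsum_mul_left]
  simp only [Complex.add_re, Complex.sub_re, Complex.neg_re, Complex.re_ofReal_mul]

lemma helm_sub (u v : FC) : helm (u - v) = helm u - helm v := by
  funext k; simp only [helm, mult, Pi.sub_apply]; ring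

lemma helmInv_sub (u v : FC) : helmInv (u - v) = helmInv u - helmInv v := by
  funext k; simp only [helmInv, mult, Pi.sub_apply]; ring

lemma wt_shift (s : ℝ) (k : ℤ) : wt (s - 2) k = wt (s - 4) k * (1 + (k : ℝ) ^ 2) ^ 2 := by
  rw [show s - 2 = (s - 4) + (1 + 1) by ring, wt_add, wt_add, wt_one]; ring

lemma norm_helm (u : FC) (k : ℤ) : ‖helm u k‖ = (1 + (k : ℝ) ^ 2) * ‖u k‖ := by
  rw [helm, mult, norm_mul, Complex.norm_real, Real.norm_eq_abs, abs_of_pos (jb_pos _)]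

lemma norm_helmInv (u : FC) (k : ℤ) : ‖helmInv u k‖ = (1 + (k : ℝ) ^ 2)⁻¹ * ‖u k‖ := by
  rw [helmInv, mult, norm_mul, Complex.norm_real, Real.norm_eq_abs,
    abs_of_pos (inv_pos.2 (jb_pos _))]

lemma helm_term (s : ℝ) (u : FC) (k : ℤ) :
    wt (s - 4) k * ‖helm u k‖ ^ 2 = wt (s - 2) k * ‖u k‖ ^ 2 := by
  rw [norm_helm, wt_shift]; ring

lemma helmInv_term (s : ℝ) (u : FC) (k : ℤ) :
    wt (s - 2) k * ‖helmInv u k‖ ^ 2 = wt (s - 4) k * ‖u k‖ ^ 2 := by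
  rw [norm_helmInv, wt_shift]
  have := (jb_pos (k : ℝ)).ne'
  field_simp

lemma memHs_helm {s : ℝ} {u : FC} (h : memHs s u) : memHs (s - 2) (helm u) := by
  have e : ∀ k : ℤ, wt (s - 2) k * ‖helm u k‖ ^ 2 = wt s k * ‖u k‖ ^ 2 := by
    intro k
    have := helm_term (s + 2) u k
    rwa [show s + 2 - 4 = s - 2 by ring, show s + 2 - 2 = s by ring] at this
  simp only [memHs, e]; exact h

lemma hsNorm_helm (s : ℝ) (u : FC) : hsNorm (s - 4) (helm u) = hsNorm (s - 2) u := by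
  simp only [hsNorm, helm_term]

lemma inner_term (s : ℝ) (Z w : FC) (k : ℤ) :
    (wt (s - 2) k : ℂ) * (helmInv Z k * (starRingEnd ℂ) (w k)) =
      (wt (s - 4) k : ℂ) * (Z k * (starRingEnd ℂ) (helm w k)) := by
  rw [wt_shift]
  simp only [helmInv, helm, mult, map_mul, Complex.conj_ofReal]
  have : (1 + (k : ℂ) ^ 2) ≠ 0 := by exact_mod_cast (jb_pos (k : ℝ)).ne'
  push_cast
  field_simp

lemma hsInner_helm (s : ℝ) (Z w : FC) :
    hsInner (s - 2) (helmInv Z) w = hsInner (s - 4) Z (helm w) := by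
  simp only [hsInner, inner_term]

lemma pairNorm_sq (s₁ s₂ : ℝ) (c d : FC) :
    pairNorm s₁ s₂ c d ^ 2 = hsNorm s₁ c ^ 2 + hsNorm s₂ d ^ 2 :=
  Real.sq_sqrt (by positivity)

lemma mul_D1_diff {s τ : ℝ} {u v η ρ : FC} (hs : 2 ≤ s) (hτ : 2 ≤ τ) (hu : memHs s u)
    (hv : memHs s v) (hη : memHs τ η) (hρ : memHs τ ρ) :
    mul u (D1 η) - mul v (D1 ρ) = mul u (D1 (η - ρ)) + mul (u - v) (D1 ρ) := by
  have l1u : Summable fun p => ‖u p‖ :=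
    l1_of_wt le_rfl (l1_bound (m := 0) hu (by linarith)).1
  have l1v : Summable fun p => ‖v p‖ :=
    l1_of_wt le_rfl (l1_bound (m := 0) hv (by linarith)).1
  have bη := D1_bdd (pt_bound (m := 1) hη (by linarith))
  have bρ := D1_bdd (pt_bound (m := 1) hρ (by linarith))
  rw [D1_sub, mul_sub_right l1u bη bρ, mul_sub_left l1u l1v bρ]
  abel

end FC

lemma gCH1_diff {s : ℝ} (hs : 11 / 2 < s) (ξ : ℕ → FC)
    (hξmem : ∀ σ : ℝ, 0 ≤ σ → ∀ k : ℕ, FC.memHs σ (ξ k))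
    (hξsum : ∀ σ : ℝ, 0 ≤ σ → Summable fun k : ℕ => FC.hsNorm σ (ξ k))
    {u v : FC} (hu : FC.memHs s u) (hv : FC.memHs s v) :
    gCH1 ξ u - gCH1 ξ v = -(FC.mul u (FC.D1 (u - v))) - FC.mul (u - v) (FC.D1 v) +
      (1 / 2 : ℝ) • FC.helmInv (FC.tsumFC fun k => FC.lie2 (ξ k) (FC.helm (u - v))) := by
  have h := FC.mul_D1_diff (by linarith) (by linarith) hu hv hu hv
  rw [FC.helm_sub, FC.tsumFC_lie2_sub (FC.noise_l1 hξmem zero_le_one)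
    (FC.noise_sq hξmem hξsum zero_le_one)
    (FC.pt_bound (m := 1) (FC.memHs_helm hu) (by linarith))
    (FC.pt_bound (m := 1) (FC.memHs_helm hv) (by linarith)), FC.helmInv_sub, smul_sub, gCH1, gCH1,
    ← neg_add', ← h]
  abel

lemma gCH2_diff {s : ℝ} (hs : 11 / 2 < s) (ξ : ℕ → FC)
    (hξmem : ∀ σ : ℝ, 0 ≤ σ → ∀ k : ℕ, FC.memHs σ (ξ k))
    (hξsum : ∀ σ : ℝ, 0 ≤ σ → Summable fun k : ℕ => FC.hsNorm σ (ξ k))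
    {u v η ρ : FC} (hu : FC.memHs s u) (hv : FC.memHs s v) (hη : FC.memHs (s - 1) η)
    (hρ : FC.memHs (s - 1) ρ) :
    gCH2 ξ u η - gCH2 ξ v ρ = -(FC.mul u (FC.D1 (η - ρ))) - FC.mul (u - v) (FC.D1 ρ) +
      (1 / 2 : ℝ) • (FC.tsumFC fun k => FC.lie2 (ξ k) (η - ρ)) := by
  have h := FC.mul_D1_diff (by linarith) (by linarith) hu hv hη hρ
  rw [FC.tsumFC_lie2_sub (FC.noise_l1 hξmem zero_le_one)
    (FC.noise_sq hξmem hξsum zero_le_one)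
    (FC.pt_bound (m := 1) hη (by linarith))
    (FC.pt_bound (m := 1) hρ (by linarith)), smul_sub, gCH2, gCH2,
    ← neg_add', ← h]
  abel

lemma hCH_diff {s : ℝ} (hs : 11 / 2 < s) (ξ : ℕ → FC)
    (hξmem : ∀ σ : ℝ, 0 ≤ σ → ∀ k : ℕ, FC.memHs σ (ξ k))
    {u v η ρ : FC} (hu : FC.memHs s u) (hv : FC.memHs s v) (hη : FC.memHs (s - 1) η)
    (hρ : FC.memHs (s - 1) ρ) (n : ℕ) :
    FC.pairNorm (s - 2) (s - 3) (hCH1 ξ n u - hCH1 ξ n v) (hCH2 ξ n η - hCH2 ξ n ρ) ^ 2 =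
      (∑' m : ℤ, FC.wt (s - 4) m * ‖FC.lie (ξ n) (FC.helm (u - v)) m‖ ^ 2) +
      ∑' m : ℤ, FC.wt (s - 3) m * ‖FC.lie (ξ n) (η - ρ) m‖ ^ 2 := by
  have hξ1 := FC.noise_l1 hξmem zero_le_one n
  have e1 : hCH1 ξ n u - hCH1 ξ n v = -FC.helmInv (FC.lie (ξ n) (FC.helm (u - v))) := by
    rw [FC.helm_sub, FC.lie_sub hξ1
      (FC.bdd_of_wt (FC.pt_bound (m := 1) (FC.memHs_helm hu) (by linarith)))
      (FC.bdd_of_wt (FC.pt_bound (m := 1) (FC.memHs_helm hv) (by linarith))), FC.helmInv_sub,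
      hCH1, hCH1]
    abel
  have e2 : hCH2 ξ n η - hCH2 ξ n ρ = -FC.lie (ξ n) (η - ρ) := by
    rw [FC.lie_sub hξ1
      (FC.bdd_of_wt (FC.pt_bound (m := 1) hη (by linarith)))
      (FC.bdd_of_wt (FC.pt_bound (m := 1) hρ (by linarith))), hCH2, hCH2]
    abel
  rw [FC.pairNorm_sq, FC.hsNorm_sq, FC.hsNorm_sq, e1, e2]
  simp only [Pi.neg_apply, norm_neg, FC.helmInv_term]


lemma final_arith {Ct1 Cp1 Ct2 Cp2 Cn1 Cn2 U V E R w t U' w' I1 I2 I3 I4 J1 J2 S1 S2 : ℝ}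
    (hCt1 : 0 < Ct1) (hCp1 : 0 < Cp1) (hCt2 : 0 < Ct2) (hCp2 : 0 < Cp2)
    (hCn1 : 0 < Cn1) (hCn2 : 0 < Cn2)
    (n1 : 0 ≤ U) (n2 : 0 ≤ V) (n4 : 0 ≤ R) (n5 : 0 ≤ w) (n6 : 0 ≤ t)
    (n7 : 0 ≤ U') (n8 : 0 ≤ w') (m1 : U' ≤ U) (m2 : w' ≤ w)
    (b1 : -(Ct1 * (U * w ^ 2)) ≤ I1) (b2 : -(Cp1 * (V * (w * w))) ≤ I2)
    (b3 : -(Ct2 * (U' * t ^ 2)) ≤ I3) (b4 : -(Cp2 * (R * (w' * t))) ≤ I4)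
    (c3 : J1 + S1 ≤ Cn1 * w ^ 2) (c6 : J2 + S2 ≤ Cn2 * t ^ 2) :
    2 * ((-I1 - I2 + 1 / 2 * J1) + (-I3 - I4 + 1 / 2 * J2)) + (S1 + S2) ≤
      (2 * Ct1 + 2 * Cp1 + 2 * Ct2 + 2 * Cp2 + Cn1 + Cn2) *
        (1 + (U ^ 2 + E ^ 2) + (V ^ 2 + R ^ 2)) * (w ^ 2 + t ^ 2) := by
  have pU : U ≤ 1 + (U ^ 2 + E ^ 2) + (V ^ 2 + R ^ 2) := by
    nlinarith [sq_nonneg (U - 1), sq_nonneg E, sq_nonneg V, sq_nonneg R]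
  have pV : V ≤ 1 + (U ^ 2 + E ^ 2) + (V ^ 2 + R ^ 2) := by
    nlinarith [sq_nonneg (V - 1), sq_nonneg E, sq_nonneg U, sq_nonneg R]
  have pR : R ≤ 1 + (U ^ 2 + E ^ 2) + (V ^ 2 + R ^ 2) := by
    nlinarith [sq_nonneg (R - 1), sq_nonneg E, sq_nonneg V, sq_nonneg U]
  have p1 : 1 ≤ 1 + (U ^ 2 + E ^ 2) + (V ^ 2 + R ^ 2) := by
    nlinarith [sq_nonneg R, sq_nonneg E, sq_nonneg V, sq_nonneg U]
  generalize 1 + (U ^ 2 + E ^ 2) + (V ^ 2 + R ^ 2) = P at *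
  have p0 : 0 ≤ P := by linarith
  have hw2 := sq_nonneg w
  have ht2 := sq_nonneg t
  have wle : w ^ 2 ≤ w ^ 2 + t ^ 2 := by linarith
  have tle : t ^ 2 ≤ w ^ 2 + t ^ 2 := by linarith
  have wwle : w * w ≤ w ^ 2 + t ^ 2 := by nlinarith
  have wtle : w' * t ≤ w ^ 2 + t ^ 2 := by
    have := mul_le_mul_of_nonneg_right m2 n6
    nlinarith [sq_nonneg (w - t)]
  have f1 := mul_le_mul_of_nonneg_left (mul_le_mul pU wle hw2 p0) hCt1.le
  have f2 := mul_le_mul_of_nonneg_left (mul_le_mul pV wwle (mul_nonneg n5 n5) p0) hCp1.le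
  have f3 := mul_le_mul_of_nonneg_left (mul_le_mul (m1.trans pU) tle ht2 p0) hCt2.le
  have f4 := mul_le_mul_of_nonneg_left (mul_le_mul pR wtle (mul_nonneg n8 n6) p0) hCp2.le
  have f5 := mul_le_mul_of_nonneg_left (mul_le_mul p1 wle hw2 p0) hCn1.le
  have f6 := mul_le_mul_of_nonneg_left (mul_le_mul p1 tle ht2 p0) hCn2.le
  have e : (2 * Ct1 + 2 * Cp1 + 2 * Ct2 + 2 * Cp2 + Cn1 + Cn2) * P * (w ^ 2 + t ^ 2) =
    2 * (Ct1 * (P * (w ^ 2 + t ^ 2))) + 2 * (Cp1 * (P * (w ^ 2 + t ^ 2))) +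
        2 * (Ct2 * (P * (w ^ 2 + t ^ 2))) + 2 * (Cp2 * (P * (w ^ 2 + t ^ 2))) +
        Cn1 * (P * (w ^ 2 + t ^ 2)) + Cn2 * (P * (w ^ 2 + t ^ 2)) := by ring
  rw [e]
  linarith

/-- Let `s > 11/2` and `Σ_k ‖ξ_k‖_{H^σ} < ∞` for all `σ ≥ 0`.  Then there is
`C > 0` such that for all `X = (u,η)`, `Y = (v,ρ)` in `H^s(𝕋) × H^{s-1}(𝕋)`:
`2 (g(X)−g(Y), X−Y)_{H^{s-2}×H^{s-3}} + Σ_k ‖h^k(X)−h^k(Y)‖²_{H^{s-2}×H^{s-3}}`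
`≤ C (1 + ‖X‖²_{H^s×H^{s-1}} + ‖Y‖²_{H^s×H^{s-1}}) ‖X−Y‖²_{H^{s-2}×H^{s-3}}`. -/
theorem statement3 (s : ℝ) (hs : 11 / 2 < s) (ξ : ℕ → FC)
    (hξmem : ∀ σ : ℝ, 0 ≤ σ → ∀ k : ℕ, FC.memHs σ (ξ k))
    (hξreal : ∀ k : ℕ, FC.isReal (ξ k))
    (hξsum : ∀ σ : ℝ, 0 ≤ σ → Summable fun k : ℕ => FC.hsNorm σ (ξ k)) :
    ∃ C > (0 : ℝ), ∀ u η v ρ : FC,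
      FC.memHs s u → FC.memHs (s - 1) η → FC.memHs s v → FC.memHs (s - 1) ρ →
      FC.isReal u → FC.isReal η → FC.isReal v → FC.isReal ρ →
      Summable (fun k : ℕ =>
        FC.pairNorm (s - 2) (s - 3) (hCH1 ξ k u - hCH1 ξ k v) (hCH2 ξ k η - hCH2 ξ k ρ) ^ 2) ∧
      2 * FC.pairInner (s - 2) (s - 3)
            (gCH1 ξ u - gCH1 ξ v) (gCH2 ξ u η - gCH2 ξ v ρ) (u - v) (η - ρ)
        + ∑' k : ℕ, FC.pairNorm (s - 2) (s - 3)
            (hCH1 ξ k u - hCH1 ξ k v) (hCH2 ξ k η - hCH2 ξ k ρ) ^ 2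
        ≤ C * (1 + FC.pairNorm s (s - 1) u η ^ 2 + FC.pairNorm s (s - 1) v ρ ^ 2)
            * FC.pairNorm (s - 2) (s - 3) (u - v) (η - ρ) ^ 2 := by
  obtain ⟨Ct1, hCt1, T1⟩ := FC.transport_est (σ := s - 2) (by linarith)
  obtain ⟨Cp1, hCp1, Q1⟩ := FC.product_est (σ := s - 2) (by linarith)
  obtain ⟨Ct2, hCt2, T2⟩ := FC.transport_est (σ := s - 3) (by linarith)
  obtain ⟨Cp2, hCp2, Q2⟩ := FC.product_est (σ := s - 3) (by linarith)
  obtain ⟨Cn1, hCn1, N1⟩ := FC.noise_est (σ := s - 4) (by linarith) ξ hξmem hξreal hξsum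
  obtain ⟨Cn2, hCn2, N2⟩ := FC.noise_est (σ := s - 3) (by linarith) ξ hξmem hξreal hξsum
  rw [show s - 2 + 2 = s by ring, show s - 2 + 1 = s - 1 by ring] at T1
  rw [show s - 2 + 2 = s by ring] at Q1
  rw [show s - 3 + 2 = s - 1 by ring, show s - 3 + 1 = s - 2 by ring] at T2
  rw [show s - 3 + 2 = s - 1 by ring] at Q2 N2
  rw [show s - 4 + 2 = s - 2 by ring] at N1
  refine ⟨2 * Ct1 + 2 * Cp1 + 2 * Ct2 + 2 * Cp2 + Cn1 + Cn2, by positivity, ?_⟩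
  intro u η v ρ hu hη hv hρ ru rη rv rρ
  have hw : FC.memHs s (u - v) := hu.sub hv
  have hθ : FC.memHs (s - 1) (η - ρ) := hη.sub hρ
  have dh := hCH_diff hs ξ hξmem hu hv hη hρ
  have dg1 := gCH1_diff hs ξ hξmem hξsum hu hv
  have dg2 := gCH2_diff hs ξ hξmem hξsum hu hv hη hρ
  obtain ⟨a1, b1⟩ := T1 u (u - v) ru hu (hw.mono (by linarith))
  obtain ⟨a2, b2⟩ := Q1 v (u - v) (u - v) hv (hw.mono (by linarith)) (hw.mono (by linarith))
  obtain ⟨a3, b3⟩ := T2 u (η - ρ) ru (hu.mono (by linarith)) (hθ.mono (by linarith))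
  obtain ⟨a4, b4⟩ := Q2 ρ (u - v) (η - ρ) hρ (hw.mono (by linarith)) (hθ.mono (by linarith))
  obtain ⟨c1, c2, c3⟩ := N1 (FC.helm (u - v)) (FC.memHs_helm hw)
  obtain ⟨c4, c5, c6⟩ := N2 (η - ρ) hθ
  simp only [dh]
  refine ⟨c2.add c5, ?_⟩
  have c1' : Summable fun k : ℤ => (FC.wt (s - 2) k : ℂ) *
      (FC.helmInv (FC.tsumFC fun n => FC.lie2 (ξ n) (FC.helm (u - v))) k *
        (starRingEnd ℂ) ((u - v) k)) := by
    simp only [FC.inner_term]; exact c1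
  rw [c2.tsum_add c5, FC.pairInner, dg1, dg2, FC.hsInner_comb a1 a2 c1',
    FC.hsInner_comb a3 a4 c4, FC.hsInner_helm, FC.pairNorm_sq, FC.pairNorm_sq, FC.pairNorm_sq]
  rw [FC.hsNorm_helm] at c3
  have m1 : FC.hsNorm (s - 1) u ≤ FC.hsNorm s u := FC.hsNorm_mono hu (by linarith)
  have m2 : FC.hsNorm (s - 3) (u - v) ≤ FC.hsNorm (s - 2) (u - v) :=
    FC.hsNorm_mono (hw.mono (by linarith)) (by linarith)
  have n1 := FC.hsNorm_nonneg s u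
  have n2 := FC.hsNorm_nonneg s v
  have n3 := FC.hsNorm_nonneg (s - 1) η
  have n4 := FC.hsNorm_nonneg (s - 1) ρ
  have n5 := FC.hsNorm_nonneg (s - 2) (u - v)
  have n6 := FC.hsNorm_nonneg (s - 3) (η - ρ)
  have n7 := FC.hsNorm_nonneg (s - 1) u
  have n8 := FC.hsNorm_nonneg (s - 3) (u - v)
  have b1' := (abs_le.1 b1).1
  have b2' := (abs_le.1 b2).1
  have b3' := (abs_le.1 b3).1
  have b4' := (abs_le.1 b4).1
  exact final_arith hCt1 hCp1 hCt2 hCp2 hCn1 hCn2 n1 n2 n4 n5 n6 n7 n8 m1 m2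
    b1' b2' b3' b4' c3 c6
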